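/- arXiv:1804.06104 — 2 statements merged into one kernel-verified Lean document; each statement's English description precedes it below -/
import Mathlib

section
/- There exists an integer Δ₀ ≥ 0 such that every finite simple graph G with maximum degree Δ ≥ Δ₀ and with no isolated edge admits a proper edge colouring c using at most Δ + 19 colours which is adjacent vertex distinguishing, i.e., S_c(u) ≠ S_c(v) for every edge uv of G. -/
/-- A proper edge colouring: distinct incident edges of `G` get distinct colours. -/
def ProperEdgeColoring {V : Type*} (G : SimpleGraph V) (c : Sym2 V → ℕ) : Prop :=
  ∀ e₁ ∈ G.edgeSet, ∀ e₂ ∈ G.edgeSet, e₁ ≠ e₂ → (∃ v, v ∈ e₁ ∧ v ∈ e₂) → c e₁ ≠ c e₂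

/-- `colorSet G c u` is the set of colours appearing on edges incident to `u`. -/
def colorSet {V : Type*} (G : SimpleGraph V) (c : Sym2 V → ℕ) (u : V) : Set ℕ :=
  {n | ∃ v, G.Adj u v ∧ c s(u, v) = n}

namespace AVD
open Finset

theorem rosenfeld_chain {I : Type*} [DecidableEq I] (N : Finset I → ℝ) (β : ℝ) (hβ : 0 < β)
    (h0 : 0 < N ∅)
    (step : ∀ X w, w ∉ X → (∀ T ⊆ X, β ^ #T * N (X \ T) ≤ N X) → β * N X ≤ N (insert w X)) :
    ∀ X, 0 < N X := by
  have key : ∀ n : ℕ, ∀ X : Finset I, #X = n → ∀ T ⊆ X, β ^ #T * N (X \ T) ≤ N X := by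
    intro n
    induction n with
    | zero =>
      intro X hX T hT
      rw [card_eq_zero] at hX
      subst hX
      rw [subset_empty] at hT
      subst hT
      simp
    | succ n ih =>
      intro X hX T hT
      rcases T.eq_empty_or_nonempty with rfl | ⟨t, ht⟩
      · simp
      · have htX := hT ht
        have hc : #(X.erase t) = n := by rw [card_erase_of_mem htX]; omega
        have h1 := ih _ hc (T.erase t) (erase_subset_erase t hT)
        have h2 := step (X.erase t) t (notMem_erase t X) (ih _ hc)
        rw [insert_erase htX] at h2
        have h3 : X.erase t \ T.erase t = X \ T := by
          ext i; simp only [mem_sdiff, mem_erase]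
          constructor
          · rintro ⟨⟨a, b⟩, c⟩; exact ⟨b, fun h => c ⟨a, h⟩⟩
          · rintro ⟨a, b⟩; refine ⟨⟨?_, a⟩, fun h => b h.2⟩; rintro rfl; exact b ht
        rw [h3] at h1
        have h4 : #T = #(T.erase t) + 1 := by rw [card_erase_add_one ht]
        rw [h4, pow_succ]
        calc _ = β * (β ^ #(T.erase t) * N (X \ T)) := by ring
          _ ≤ β * N (X.erase t) := by gcongr
          _ ≤ _ := h2
  intro X
  have := key _ X rfl X subset_rfl
  rw [sdiff_self] at this
  exact lt_of_lt_of_le (mul_pos (pow_pos hβ _) h0) this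

open Classical in
theorem ww {I C ι : Type*} [Fintype I] [Fintype C]
    (O : I → Finset C) (Bad : (I → Option C) → Prop)
    (hmono : ∀ f g : I → Option C, (∀ i c, f i = some c → g i = some c) → Bad f → Bad g)
    (h0 : ¬ Bad (fun _ => none))
    (β : ℝ) (hβ : 0 < β)
    (Ev : I → Finset ι) (T : I → ι → Finset I)
    (K : I → ι → ℝ) (P : I → ι → (I → Option C) → Prop)
    (hev : ∀ w f, (∀ i c, f i = some c → c ∈ O i) → f w ≠ none → Bad f →
      ¬ Bad (Function.update f w none) →
      ∃ τ ∈ Ev w, P w τ f ∧ w ∉ T w τ ∧ ∀ i ∈ T w τ, f i ≠ none)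
    (hfib : ∀ w, ∀ τ ∈ Ev w, ∀ g : I → Option C,
      ((univ.filter fun f : I → Option C => (∀ i c, f i = some c → c ∈ O i) ∧ f w ≠ none ∧
        ¬ Bad (Function.update f w none) ∧ P w τ f ∧ ∀ i, i ≠ w → i ∉ T w τ → f i = g i).card : ℝ)
        ≤ K w τ)
    (hsum : ∀ w, β + ∑ τ ∈ Ev w, K w τ / β ^ #(T w τ) ≤ #(O w)) :
    ∃ f : I → C, (∀ i, f i ∈ O i) ∧ ¬ Bad (fun i => some (f i)) := by
  let Val : Finset I → Finset (I → Option C) := fun X =>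
    univ.filter fun f => (∀ i c, f i = some c → c ∈ O i) ∧ (∀ i, f i ≠ none ↔ i ∈ X) ∧ ¬ Bad f
  have hV : ∀ X f, f ∈ Val X ↔
      (∀ i c, f i = some c → c ∈ O i) ∧ (∀ i, f i ≠ none ↔ i ∈ X) ∧ ¬ Bad f := by
    intro X f; simp [Val]
  have main := rosenfeld_chain (fun X => (#(Val X) : ℝ)) β hβ ?_ ?_ univ
  · have : 0 < #(Val univ) := by exact_mod_cast main
    obtain ⟨f, hf⟩ := card_pos.mp this
    rw [hV] at hf
    obtain ⟨h1, h2, h3⟩ := hf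
    have h4 : ∀ i, ∃ c, f i = some c := fun i =>
      Option.ne_none_iff_exists'.mp ((h2 i).2 (mem_univ i))
    choose g hg using h4
    refine ⟨g, fun i => h1 i _ (hg i), ?_⟩
    have : (fun i => some (g i)) = f := by ext1 i; rw [hg]
    rwa [this]
  · have : (fun _ => none) ∈ Val ∅ := by
      rw [hV]; simp [h0]
    have := card_pos.mpr ⟨_, this⟩
    exact_mod_cast this
  · intro X w hw hT
    -- A: extensions
    let A : Finset (I → Option C) := univ.filter fun f =>
      (∀ i c, f i = some c → c ∈ O i) ∧ (∀ i, f i ≠ none ↔ i ∈ insert w X) ∧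
        ¬ Bad (Function.update f w none)
    have hA : ∀ f, f ∈ A ↔ (∀ i c, f i = some c → c ∈ O i) ∧ (∀ i, f i ≠ none ↔ i ∈ insert w X) ∧
        ¬ Bad (Function.update f w none) := by intro f; simp [A]
    have hcA : #(Val X) * #(O w) ≤ #A := by
      rw [← card_product]
      apply card_le_card_of_injOn (fun p => Function.update p.1 w (some p.2))
      · rintro ⟨f, c⟩ hfc
        simp only [coe_product, Set.mem_prod, mem_coe, hV] at hfc
        obtain ⟨⟨h1, h2, h3⟩, h4⟩ := hfc
        have hwn : f w = none := by
          by_contra h; exact hw ((h2 w).1 h)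
        simp only [mem_coe, hA]
        refine ⟨?_, ?_, ?_⟩
        · intro i c' hi
          by_cases h : i = w
          · subst h; simp at hi; subst hi; exact h4
          · rw [Function.update_of_ne h] at hi; exact h1 _ _ hi
        · intro i
          by_cases h : i = w
          · subst h; simp
          · rw [Function.update_of_ne h, h2]; simp [h]
        · rw [Function.update_idem, ← hwn, Function.update_eq_self]; exact h3
      · rintro ⟨f, c⟩ hfc ⟨f', c'⟩ hfc' heq
        simp only [coe_product, Set.mem_prod, mem_coe, hV] at hfc hfc'
        have hwn : f w = none := by
          by_contra h; exact hw ((hfc.1.2.1 w).1 h)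
        have hwn' : f' w = none := by
          by_contra h; exact hw ((hfc'.1.2.1 w).1 h)
        simp only at heq
        have e1 : c = c' := by
          have := congrFun heq w; simpa using this
        have e2 : f = f' := by
          ext1 i
          by_cases h : i = w
          · subst h; rw [hwn, hwn']
          · have := congrFun heq i
            rwa [Function.update_of_ne h, Function.update_of_ne h] at this
        rw [e1, e2]
    let B : ι → Finset (I → Option C) := fun τ => A.filter fun f => P w τ f ∧ w ∉ T w τ ∧ ∀ i ∈ T w τ, f i ≠ none
    have hsub : A ⊆ Val (insert w X) ∪ (Ev w).biUnion B := by
      intro f hf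
      have hf' := (hA f).1 hf
      by_cases hb : Bad f
      · obtain ⟨τ, hτ, h1, h2, h3⟩ := hev w f hf'.1 ((hf'.2.1 w).2 (mem_insert_self _ _)) hb hf'.2.2
        apply mem_union_right
        rw [mem_biUnion]
        exact ⟨τ, hτ, by simp only [B, mem_filter]; exact ⟨hf, h1, h2, h3⟩⟩
      · apply mem_union_left
        rw [hV]; exact ⟨hf'.1, hf'.2.1, hb⟩
    have hB : ∀ τ ∈ Ev w, (#(B τ) : ℝ) ≤ K w τ / β ^ #(T w τ) * #(Val X) := by
      intro τ hτ
      have hK : 0 ≤ K w τ := le_trans (Nat.cast_nonneg _) (hfib w τ hτ (fun _ => none))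
      by_cases hTX : w ∉ T w τ ∧ T w τ ⊆ X
      · have h1 : (#(B τ) : ℝ) ≤ K w τ * #(Val (X \ T w τ)) := by
          let r : (I → Option C) → (I → Option C) := fun f i =>
            if i = w ∨ i ∈ T w τ then none else f i
          have hmap : ∀ f ∈ B τ, r f ∈ Val (X \ T w τ) := by
            intro f hf
            simp only [B, mem_filter, hA] at hf
            obtain ⟨⟨h1, h2, h3⟩, h4, h5, h6⟩ := hf
            rw [hV]
            refine ⟨?_, ?_, ?_⟩
            · intro i c hi
              simp only [r] at hi
              split_ifs at hi
              exact h1 _ _ hi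
            · intro i
              simp only [r, mem_sdiff]
              have := h2 i
              rw [mem_insert] at this
              split_ifs with h
              · simp
                rcases h with rfl | h
                · intro h; exact absurd h hw
                · intro _; exact h
              · rw [this]; push Not at h; simp [h.1, h.2]
            · intro hb
              apply h3
              refine hmono _ _ ?_ hb
              intro i c hi
              simp only [r] at hi
              split_ifs at hi with h
              push Not at h
              rw [Function.update_of_ne h.1]; exact hi
          have := card_eq_sum_card_fiberwise hmap
          rw [this]
          push_cast
          calc _ ≤ ∑ g ∈ Val (X \ T w τ), K w τ := by
                apply sum_le_sum
                intro g hg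
                refine le_trans ?_ (hfib w τ hτ g)
                norm_cast
                apply card_le_card
                intro f hf
                simp only [B, mem_filter, hA] at hf
                obtain ⟨⟨⟨h1, h2, h3⟩, h4, h5, h6⟩, h7⟩ := hf
                simp only [mem_filter, mem_univ, true_and]
                refine ⟨h1, (h2 w).2 (mem_insert_self _ _), h3, h4, ?_⟩
                intro i hi1 hi2
                rw [← h7]; simp [r, hi1, hi2]
            _ = _ := by rw [sum_const, nsmul_eq_mul, mul_comm]
        have h2 := hT _ hTX.2
        have h3 : (#(Val (X \ T w τ)) : ℝ) ≤ #(Val X) / β ^ #(T w τ) := by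
          rw [le_div_iff₀ (pow_pos hβ _), mul_comm]; exact h2
        calc _ ≤ K w τ * #(Val (X \ T w τ)) := h1
          _ ≤ K w τ * (#(Val X) / β ^ #(T w τ)) := by gcongr
          _ = _ := by ring
      · have : B τ = ∅ := by
          rw [eq_empty_iff_forall_notMem]
          intro f hf
          simp only [B, mem_filter, hA] at hf
          obtain ⟨⟨h1, h2, h3⟩, h4, h5, h6⟩ := hf
          apply hTX
          refine ⟨h5, ?_⟩
          intro i hi
          have := (h2 i).1 (h6 i hi)
          rw [mem_insert] at this
          rcases this with rfl | h
          · exact absurd hi h5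
          · exact h
        rw [this]
        simp only [card_empty, Nat.cast_zero]
        positivity
    have hcount : (#A : ℝ) ≤ #(Val (insert w X)) + ∑ τ ∈ Ev w, (#(B τ) : ℝ) := by
      have := (card_le_card hsub).trans (card_union_le _ _)
      have h2 := this.trans (Nat.add_le_add_left (card_biUnion_le) _)
      exact_mod_cast h2
    have h5 : ∑ τ ∈ Ev w, (#(B τ) : ℝ) ≤ (∑ τ ∈ Ev w, K w τ / β ^ #(T w τ)) * #(Val X) := by
      rw [sum_mul]; exact sum_le_sum hB
    have h6 : (#(Val X) : ℝ) * #(O w) ≤ #A := by exact_mod_cast hcA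
    have h7 := mul_le_mul_of_nonneg_left (hsum w) (Nat.cast_nonneg (α := ℝ) #(Val X))
    nlinarith

def FamOK {I C ι : Type*} [DecidableEq I] (O : I → Finset C) (Bad : (I → Option C) → Prop) (w : I)
    (Ev : Finset ι) (T : ι → Finset I) (P : ι → (I → Option C) → Prop) (n k t : ℕ) : Prop :=
  #Ev ≤ n ∧ (∀ τ ∈ Ev, #(T τ) = t) ∧
    ∀ τ ∈ Ev, ∀ (g : I → Option C) (A : Finset (I → Option C)),
      (∀ f ∈ A, (∀ i c, f i = some c → c ∈ O i) ∧ f w ≠ none ∧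
        ¬ Bad (Function.update f w none) ∧ P τ f ∧ ∀ i, i ≠ w → i ∉ T τ → f i = g i) → #A ≤ k

def Hit {I C ι : Type*} (w : I) (Ev : Finset ι) (T : ι → Finset I)
    (P : ι → (I → Option C) → Prop) (f : I → Option C) : Prop :=
  ∃ τ ∈ Ev, P τ f ∧ w ∉ T τ ∧ ∀ i ∈ T τ, f i ≠ none

theorem fam_sum {I C ι : Type*} [DecidableEq I] (β : ℝ) (hβ : 0 < β) (O : I → Finset C)
    (Bad : (I → Option C) → Prop) (w : I) (E : Finset ι) (T : ι → Finset I)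
    (P : ι → (I → Option C) → Prop)
    (n k t : ℕ) (h : FamOK O Bad w E T P n k t) :
    ∑ τ ∈ E, (k : ℝ) / β ^ #(T τ) ≤ n * (k / β ^ t) := by
  rw [sum_congr rfl (g := fun _ => (k : ℝ) / β ^ t) (fun τ hτ => by rw [h.2.1 τ hτ]),
    sum_const, nsmul_eq_mul]
  have := h.1
  gcongr

theorem ww3 {I C ι₁ ι₂ ι₃ : Type*} [Fintype I] [Fintype C] [DecidableEq I]
    (O : I → Finset C) (Bad : (I → Option C) → Prop)
    (hmono : ∀ f g : I → Option C, (∀ i c, f i = some c → g i = some c) → Bad f → Bad g)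
    (h0 : ¬ Bad (fun _ => none))
    (β : ℝ) (hβ : 0 < β)
    (E₁ : I → Finset ι₁) (T₁ : I → ι₁ → Finset I) (P₁ : I → ι₁ → (I → Option C) → Prop)
    (E₂ : I → Finset ι₂) (T₂ : I → ι₂ → Finset I) (P₂ : I → ι₂ → (I → Option C) → Prop)
    (E₃ : I → Finset ι₃) (T₃ : I → ι₃ → Finset I) (P₃ : I → ι₃ → (I → Option C) → Prop)
    (n₁ n₂ n₃ : I → ℕ) (k₁ k₂ k₃ t₁ t₂ t₃ : ℕ)
    (h1 : ∀ w, FamOK O Bad w (E₁ w) (T₁ w) (P₁ w) (n₁ w) k₁ t₁)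
    (h2 : ∀ w, FamOK O Bad w (E₂ w) (T₂ w) (P₂ w) (n₂ w) k₂ t₂)
    (h3 : ∀ w, FamOK O Bad w (E₃ w) (T₃ w) (P₃ w) (n₃ w) k₃ t₃)
    (hev : ∀ w f, (∀ i c, f i = some c → c ∈ O i) → f w ≠ none → Bad f →
      ¬ Bad (Function.update f w none) →
      Hit w (E₁ w) (T₁ w) (P₁ w) f ∨ Hit w (E₂ w) (T₂ w) (P₂ w) f ∨ Hit w (E₃ w) (T₃ w) (P₃ w) f)
    (hsum : ∀ w, β + (n₁ w * (k₁ / β ^ t₁) + (n₂ w * (k₂ / β ^ t₂) + n₃ w * (k₃ / β ^ t₃)))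
      ≤ #(O w)) :
    ∃ f : I → C, (∀ i, f i ∈ O i) ∧ ¬ Bad (fun i => some (f i)) := by
  have hdec : ‹DecidableEq I› = fun a b => Classical.propDecidable (a = b) := Subsingleton.elim _ _
  subst hdec
  classical
  refine ww (ι := ι₁ ⊕ (ι₂ ⊕ ι₃)) O Bad hmono h0 β hβ
    (fun w => (E₁ w).disjSum ((E₂ w).disjSum (E₃ w)))
    (fun w => Sum.elim (T₁ w) (Sum.elim (T₂ w) (T₃ w)))
    (fun w => Sum.elim (fun _ => (k₁ : ℝ)) (Sum.elim (fun _ => (k₂ : ℝ)) (fun _ => (k₃ : ℝ))))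
    (fun w => Sum.elim (P₁ w) (Sum.elim (P₂ w) (P₃ w))) ?_ ?_ ?_
  · intro w f hv hw hb hnb
    rcases hev w f hv hw hb hnb with ⟨τ, h⟩ | ⟨τ, h⟩ | ⟨τ, h⟩
    · exact ⟨.inl τ, by simpa using h⟩
    · exact ⟨.inr (.inl τ), by simpa using h⟩
    · exact ⟨.inr (.inr τ), by simpa using h⟩
  · intro w τ hτ g
    rcases τ with τ | τ | τ
    · have := (h1 w).2.2 τ (by simpa using hτ) g
      simp only [Sum.elim_inl, Nat.cast_le]
      exact this _ fun f hf => (mem_filter.1 hf).2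
    · have := (h2 w).2.2 τ (by simpa using hτ) g
      simp only [Sum.elim_inl, Sum.elim_inr, Nat.cast_le]
      exact this _ fun f hf => (mem_filter.1 hf).2
    · have := (h3 w).2.2 τ (by simpa using hτ) g
      simp only [Sum.elim_inr, Nat.cast_le]
      exact this _ fun f hf => (mem_filter.1 hf).2
  · intro w
    refine le_trans ?_ (hsum w)
    simp only [sum_disjSum, Sum.elim_inl, Sum.elim_inr]
    have a1 := fam_sum β hβ _ _ _ _ _ _ _ _ _ (h1 w)
    have a2 := fam_sum β hβ _ _ _ _ _ _ _ _ _ (h2 w)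
    have a3 := fam_sum β hβ _ _ _ _ _ _ _ _ _ (h3 w)
    linarith

end AVD

namespace AVD
open Finset

open Classical in
theorem three_ends {W : Type*} [Fintype W] (G : SimpleGraph W) (h2 : ∀ v, G.degree v ≤ 2)
    (x y z : W) (hxy : x ≠ y) (hxz : x ≠ z) (hyz : y ≠ z)
    (hx : G.degree x ≤ 1) (hy : G.degree y ≤ 1) (hz : G.degree z ≤ 1)
    (rxy : G.Reachable x y) (rxz : G.Reachable x z) : False := by
  let S : Set W := (G.connectedComponentMk x).supp
  have hxS : x ∈ S := rfl
  have hyS : y ∈ S := by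
    simp only [S, SimpleGraph.ConnectedComponent.mem_supp_iff, SimpleGraph.ConnectedComponent.eq]
    exact rxy.symm
  have hzS : z ∈ S := by
    simp only [S, SimpleGraph.ConnectedComponent.mem_supp_iff, SimpleGraph.ConnectedComponent.eq]
    exact rxz.symm
  let H := G.induce S
  have hconn : H.Connected := (G.connectedComponentMk x).connected_toSimpleGraph
  have hc := hconn.card_vert_le_card_edgeSet_add_one
  have hdeg : ∀ v : S, H.degree v ≤ G.degree v.1 := by
    intro v
    rw [← SimpleGraph.card_neighborFinset_eq_degree, ← SimpleGraph.card_neighborFinset_eq_degree]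
    apply card_le_card_of_injOn (fun u => u.1)
    · intro u hu
      simpa [H] using hu
    · intro a _ b _ h; exact Subtype.ext h
  have hsum := H.sum_degrees_eq_twice_card_edges
  have hle : ∑ v : S, (H.degree v + if v.1 = x ∨ v.1 = y ∨ v.1 = z then 1 else 0) ≤ ∑ v : S, 2 := by
    apply sum_le_sum
    intro v _
    have h1 := hdeg v
    split_ifs with h
    · rcases h with h | h | h <;> rw [h] at h1 <;> omega
    · have := h2 v.1; omega
  rw [sum_add_distrib, hsum] at hle
  have h3 : 3 ≤ ∑ v : S, (if v.1 = x ∨ v.1 = y ∨ v.1 = z then 1 else 0) := by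
    rw [← card_filter]
    have hcard : #({⟨x, hxS⟩, ⟨y, hyS⟩, ⟨z, hzS⟩} : Finset S) = 3 := by
      rw [card_eq_three]
      exact ⟨_, _, _, by simpa using hxy, by simpa using hxz, by simpa using hyz, rfl⟩
    rw [← hcard]
    apply card_le_card
    intro v hv
    simp only [mem_insert, mem_singleton] at hv
    simp only [mem_filter, mem_univ, true_and]
    rcases hv with rfl | rfl | rfl <;> simp
  simp only [sum_const, card_univ, smul_eq_mul] at hle
  rw [Nat.card_eq_fintype_card, Nat.card_eq_fintype_card, ← SimpleGraph.edgeFinset_card] at hc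
  omega

section viz
variable {E W : Type*} (ends : E → Sym2 W) (K : ℕ)

def PC (F : Finset E) (c : E → ℕ) : Prop :=
  (∀ e ∈ F, c e < K) ∧
    ∀ e ∈ F, ∀ e' ∈ F, e ≠ e' → ∀ v, v ∈ ends e → v ∈ ends e' → c e ≠ c e'

def Miss (F : Finset E) (c : E → ℕ) (v : W) (α : ℕ) : Prop :=
  α < K ∧ ∀ e ∈ F, v ∈ ends e → c e ≠ α

def Stp (x : W) (F : Finset E) (c : E → ℕ) (e e' : E) : Prop :=
  e' ∈ F ∧ x ∈ ends e' ∧ ∃ y, ends e = s(x, y) ∧ Miss ends K F c y (c e')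

variable {ends K}

open Classical in
theorem shift_fan (x : W) (n : ℕ) : ∀ (F : Finset E) (c : E → ℕ) (f : ℕ → E) (α : ℕ) (y : W),
    PC ends K F c → f 0 ∉ F → (∀ i < n, Stp ends K x F c (f i) (f (i+1))) →
    ends (f n) = s(x, y) → Miss ends K F c x α → Miss ends K F c y α →
    ∃ c', PC ends K (insert (f 0) F) c' := by
  induction n using Nat.strong_induction_on with
  | _ n ih =>
    intro F c f α y hc h0 hst hn hx hy
    rcases n with _ | n
    · refine ⟨Function.update c (f 0) α, ?_, ?_⟩
      · intro e he
        by_cases h : e = f 0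
        · subst h; simp; exact hx.1
        · rw [Function.update_of_ne h]; exact hc.1 e ((mem_insert.1 he).resolve_left h)
      · have key : ∀ e ∈ F, ∀ v, v ∈ ends e → v ∈ ends (f 0) → c e ≠ α := by
          intro e he v hv hv0
          rw [hn, Sym2.mem_iff] at hv0
          rcases hv0 with rfl | rfl
          · exact hx.2 e he hv
          · exact hy.2 e he hv
        intro e he e' he' hne v hv hv'
        by_cases h : e = f 0
        · subst h
          have h' : e' ≠ f 0 := hne.symm
          rw [Function.update_of_ne h', Function.update_self]
          exact (key e' ((mem_insert.1 he').resolve_left h') v hv' hv).symm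
        · by_cases h' : e' = f 0
          · subst h'
            rw [Function.update_of_ne h, Function.update_self]
            exact key e ((mem_insert.1 he).resolve_left h) v hv hv'
          · rw [Function.update_of_ne h, Function.update_of_ne h']
            exact hc.2 e ((mem_insert.1 he).resolve_left h) e' ((mem_insert.1 he').resolve_left h')
              hne v hv hv'
    · by_cases hrep : ∃ i, 1 ≤ i ∧ i ≤ n ∧ f (i+1) = f 1
      · obtain ⟨i, hi1, hi2, hi⟩ := hrep
        let g : ℕ → E := fun k => if k = 0 then f 0 else f (k + i)
        have := ih (n + 1 - i) (by omega) F c g α y hc (by simpa [g] using h0) ?_ ?_ hx hy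
        · simpa [g] using this
        · intro k hk
          by_cases hk0 : k = 0
          · subst hk0
            simp only [g, if_true, Nat.zero_add, one_ne_zero, if_false]
            rw [show 1 + i = i + 1 by omega, hi]
            exact hst 0 (by omega)
          · simp only [g, hk0, if_false, Nat.succ_ne_zero]
            rw [show k + 1 + i = k + i + 1 by omega]
            exact hst (k + i) (by omega)
        · have : n + 1 - i ≠ 0 := by omega
          simp only [g, this, if_false]
          rw [show n + 1 - i + i = n + 1 by omega]; exact hn
      · push Not at hrep
        obtain ⟨h1F, h1x, y0, hy0, hm0⟩ := hst 0 (by omega)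
        simp only [Nat.zero_add] at h1F h1x hm0
        have h01 : f 0 ≠ f 1 := fun h => h0 (h ▸ h1F)
        let F' := insert (f 0) (F.erase (f 1))
        let c' := Function.update c (f 0) (c (f 1))
        have hcF : ∀ e ∈ F, c' e = c e := by
          intro e he
          exact Function.update_of_ne (fun h => h0 (by rw [← h]; exact he)) _ _
        have hc0 : c' (f 0) = c (f 1) := Function.update_self _ _ _
        have key : ∀ e ∈ F.erase (f 1), ∀ v, v ∈ ends e → v ∈ ends (f 0) → c e ≠ c (f 1) := by
          intro e he v hv hv0
          rw [mem_erase] at he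
          rw [hy0, Sym2.mem_iff] at hv0
          rcases hv0 with rfl | rfl
          · exact hc.2 e he.2 (f 1) h1F he.1 _ hv h1x
          · exact hm0.2 e he.2 hv
        have hPC' : PC ends K F' c' := by
          refine ⟨?_, ?_⟩
          · intro e he
            rcases mem_insert.1 he with rfl | he
            · rw [hc0]; exact hc.1 _ h1F
            · rw [hcF e (mem_of_mem_erase he)]; exact hc.1 _ (mem_of_mem_erase he)
          · intro e he e' he' hne v hv hv'
            rcases mem_insert.1 he with h | h
            · rcases mem_insert.1 he' with h' | h'
              · exact absurd (h.trans h'.symm) hne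
              · rw [hcF e' (mem_of_mem_erase h'), h, hc0]
                rw [h] at hv
                exact (key e' h' v hv' hv).symm
            · rcases mem_insert.1 he' with h' | h'
              · rw [hcF e (mem_of_mem_erase h), h', hc0]
                rw [h'] at hv'
                exact key e h v hv hv'
              · rw [hcF e (mem_of_mem_erase h), hcF e' (mem_of_mem_erase h')]
                exact hc.2 e (mem_of_mem_erase h) e' (mem_of_mem_erase h') hne v hv hv'
        have hmiss : ∀ v γ, γ ≠ c (f 1) → Miss ends K F c v γ → Miss ends K F' c' v γ := by
          intro v γ hγ hm
          refine ⟨hm.1, ?_⟩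
          intro e he hv
          rcases mem_insert.1 he with rfl | he
          · rw [hc0]; exact hγ.symm
          · rw [hcF e (mem_of_mem_erase he)]; exact hm.2 e (mem_of_mem_erase he) hv
        have hα : α ≠ c (f 1) := (hx.2 _ h1F h1x).symm
        have hA : f (0+1) ∉ F' := by simp [F', h01.symm]
        have hB : ∀ i < n, Stp ends K x F' c' (f (i+1)) (f (i+1+1)) := by
          intro i hi
          obtain ⟨ha, hb, z, hz, hm⟩ := hst (i+1) (by omega)
          have hne : f (i+1+1) ≠ f 1 := hrep (i+1) (by omega) (by omega)
          refine ⟨?_, hb, z, hz, ?_⟩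
          · simp only [F', mem_insert, mem_erase]; right; exact ⟨hne, ha⟩
          · rw [hcF _ ha]
            exact hmiss _ _ (hc.2 _ ha _ h1F hne x hb h1x) hm
        obtain ⟨d, hd⟩ := ih n (by omega) F' c' (fun k => f (k+1)) α y hPC' hA hB hn
          (hmiss _ _ hα hx) (hmiss _ _ hα hy)
        refine ⟨d, ?_⟩
        have : insert (f (0+1)) F' = insert (f 0) F := by
          simp only [F', Nat.zero_add]
          rw [insert_comm, insert_erase h1F]
        rwa [this] at hd

open Classical in
/-- Kempe swap. -/
theorem kempe [Fintype W] (F : Finset E) (c : E → ℕ) (hc : PC ends K F c) (α β : ℕ) (hα : α < K)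
    (hβ : β < K) (x y z : W) (hxy : x ≠ y) (hxz : x ≠ z) (hyz : y ≠ z)
    (mx : Miss ends K F c x β) (my : Miss ends K F c y α) (mz : Miss ends K F c z α) :
    ∃ (c' : E → ℕ) (S : Set W), PC ends K F c' ∧ (y ∈ S ∨ z ∈ S) ∧ x ∉ S ∧
      (∀ e ∈ F, ∀ v ∈ ends e, v ∉ S → c' e = c e) ∧
      (∀ e ∈ F, ∀ v ∈ ends e, v ∈ S → c' e = Equiv.swap α β (c e)) := by
  obtain ⟨G, hG⟩ : ∃ G : SimpleGraph W, ∀ u v, G.Adj u v ↔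
      u ≠ v ∧ ∃ e ∈ F, ends e = s(u, v) ∧ (c e = α ∨ c e = β) :=
    ⟨{ Adj := fun u v => u ≠ v ∧ ∃ e ∈ F, ends e = s(u, v) ∧ (c e = α ∨ c e = β)
       symm := ⟨by
        rintro u v ⟨h, e, he, h1, h2⟩
        exact ⟨h.symm, e, he, by rw [h1, Sym2.eq_swap], h2⟩⟩
       loopless := ⟨fun u h => h.1 rfl⟩ }, fun u v => Iff.rfl⟩
  have hdegS : ∀ v, ∀ Z : Finset ℕ,
      (∀ e ∈ F, v ∈ ends e → (c e = α ∨ c e = β) → c e ∈ Z) → G.degree v ≤ #Z := by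
    intro v Z hZ
    have hex : ∀ u, ∃ γ, G.Adj v u → ∃ e ∈ F, ends e = s(v, u) ∧ c e = γ ∧ γ ∈ Z := by
      intro u
      by_cases h : G.Adj v u
      · obtain ⟨_, e, he, h1, h2⟩ := (hG v u).1 h
        exact ⟨c e, fun _ => ⟨e, he, h1, rfl, hZ e he (by rw [h1]; simp) h2⟩⟩
      · exact ⟨0, fun h' => absurd h' h⟩
    choose g hg using hex
    rw [← SimpleGraph.card_neighborFinset_eq_degree]
    apply card_le_card_of_injOn g
    · intro u hu
      simp only [mem_coe, SimpleGraph.mem_neighborFinset] at hu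
      obtain ⟨e, h1, h2, h3, h4⟩ := hg u hu
      exact h4
    · intro u hu u' hu' h
      simp only [mem_coe, SimpleGraph.mem_neighborFinset] at hu hu'
      obtain ⟨e, h1, h2, h3, h4⟩ := hg u hu
      obtain ⟨e', h1', h2', h3', h4'⟩ := hg u' hu'
      have : e = e' := by
        by_contra hne
        exact hc.2 _ h1 _ h1' hne v (by rw [h2]; simp) (by rw [h2']; simp) (by rw [h3, h3', h])
      rw [this, h2'] at h2
      exact (Sym2.congr_right.1 h2).symm
  have hd2 : ∀ v, G.degree v ≤ 2 := by
    intro v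
    refine (hdegS v {α, β} ?_).trans card_le_two
    intro e _ _ h; simpa using h
  have hdx : G.degree x ≤ 1 := by
    refine (hdegS x {α} ?_).trans (by simp)
    intro e he hx h
    have := mx.2 e he hx
    simpa using h.resolve_right this
  have hdy : G.degree y ≤ 1 := by
    refine (hdegS y {β} ?_).trans (by simp)
    intro e he hx h
    have := my.2 e he hx
    simpa using h.resolve_left this
  have hdz : G.degree z ≤ 1 := by
    refine (hdegS z {β} ?_).trans (by simp)
    intro e he hx h
    have := mz.2 e he hx
    simpa using h.resolve_left this
  have hS : ∃ S : Set W, (y ∈ S ∨ z ∈ S) ∧ x ∉ S ∧ ∀ u v, G.Adj u v → u ∈ S → v ∈ S := by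
    by_cases hr : G.Reachable y x
    · have hr' : ¬ G.Reachable z x := by
        intro h
        exact three_ends G hd2 x y z hxy hxz hyz hdx hdy hdz hr.symm h.symm
      exact ⟨{v | G.Reachable z v}, Or.inr (SimpleGraph.Reachable.refl z), hr',
        fun u v huv hu => SimpleGraph.Reachable.trans hu huv.reachable⟩
    · exact ⟨{v | G.Reachable y v}, Or.inl (SimpleGraph.Reachable.refl y), hr,
        fun u v huv hu => SimpleGraph.Reachable.trans hu huv.reachable⟩
  obtain ⟨S, hyzS, hxS, hcl⟩ := hS
  let c' : E → ℕ := fun e => if ∃ v ∈ ends e, v ∈ S then Equiv.swap α β (c e) else c e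
  have hin : ∀ e ∈ F, ∀ v ∈ ends e, v ∈ S → c' e = Equiv.swap α β (c e) := by
    intro e _ v hv hvS
    simp only [c']
    rw [if_pos ⟨v, hv, hvS⟩]
  have hout : ∀ e ∈ F, ∀ v ∈ ends e, v ∉ S → c' e = c e := by
    intro e he v hv hvS
    simp only [c']
    split_ifs with h
    · obtain ⟨u, hu, huS⟩ := h
      have huv : u ≠ v := fun h => hvS (h ▸ huS)
      have hend : ends e = s(u, v) := (Sym2.mem_and_mem_iff huv).1 ⟨hu, hv⟩
      apply Equiv.swap_apply_of_ne_of_ne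
      · intro h; exact hvS (hcl u v ((hG u v).2 ⟨huv, e, he, hend, Or.inl h⟩) huS)
      · intro h; exact hvS (hcl u v ((hG u v).2 ⟨huv, e, he, hend, Or.inr h⟩) huS)
    · rfl
  refine ⟨c', S, ⟨?_, ?_⟩, hyzS, hxS, hout, hin⟩
  · intro e he
    simp only [c']
    split_ifs
    · rw [Equiv.swap_apply_def]
      split_ifs
      · exact hβ
      · exact hα
      · exact hc.1 e he
    · exact hc.1 e he
  · intro e he e' he' hne v hv hv' heq
    by_cases hvS : v ∈ S
    · rw [hin e he v hv hvS, hin e' he' v hv' hvS] at heq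
      exact hc.2 e he e' he' hne v hv hv' ((Equiv.swap α β).injective heq)
    · rw [hout e he v hv hvS, hout e' he' v hv' hvS] at heq
      exact hc.2 e he e' he' hne v hv hv' heq

open Classical in
theorem vizing_step [Fintype W] (F : Finset E) (c : E → ℕ) (hc : PC ends K F c) (e0 : E)
    (he0 : e0 ∉ F) (x : W) (hx0 : x ∈ ends e0) (hnd : ∀ e ∈ insert e0 F, ¬ (ends e).IsDiag)
    (hdeg : #{e ∈ insert e0 F | x ∈ ends e} ≤ K)
    (hm : ∀ y, y ≠ x → #{e ∈ insert e0 F | y ∈ ends e} + #{e ∈ insert e0 F | ends e = s(x, y)} ≤ K) :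
    ∃ c', PC ends K (insert e0 F) c' := by
  by_contra hcon
  -- missing sets
  let M : W → Finset ℕ := fun v => (range K).filter fun γ => Miss ends K F c v γ
  have hM : ∀ v γ, γ ∈ M v ↔ Miss ends K F c v γ := by
    intro v γ; simp only [M, mem_filter, mem_range]
    exact ⟨fun h => h.2, fun h => ⟨h.1, h⟩⟩
  have hMc : ∀ v, K ≤ #(M v) + #{e ∈ F | v ∈ ends e} := by
    intro v
    have : range K ⊆ M v ∪ ({e ∈ F | v ∈ ends e}).image c := by
      intro γ hγ
      by_cases h : Miss ends K F c v γ
      · exact mem_union_left _ ((hM v γ).2 h)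
      · apply mem_union_right
        unfold Miss at h
        push Not at h
        obtain ⟨e, h1, h2, h3⟩ := h (mem_range.1 hγ)
        rw [mem_image]; exact ⟨e, by simp [h1, h2], h3⟩
    calc K = #(range K) := (card_range K).symm
      _ ≤ _ := card_le_card this
      _ ≤ _ := card_union_le _ _
      _ ≤ _ := Nat.add_le_add_left card_image_le _
  -- β missing at x
  have hMx : (M x).Nonempty := by
    rw [← card_pos]
    have h1 := hMc x
    have h2 : #{e ∈ F | x ∈ ends e} < #{e ∈ insert e0 F | x ∈ ends e} := by
      rw [filter_insert, if_pos hx0, card_insert_of_notMem (by simp [he0])]; omega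
    omega
  obtain ⟨β, hβ⟩ := hMx
  rw [hM] at hβ
  let R : E → Prop := fun e => ∃ (n : ℕ) (f : ℕ → E), f 0 = e0 ∧ f n = e ∧
    ∀ i < n, Stp ends K x F c (f i) (f (i+1))
  have claimA : ∀ e y γ, R e → ends e = s(x, y) → Miss ends K F c x γ → ¬ Miss ends K F c y γ := by
    rintro e y γ ⟨n, f, h0, hn, hs⟩ hey h1 h2
    apply hcon
    rw [← h0]
    exact shift_fan x n F c f γ y hc (by rw [h0]; exact he0) hs (by rw [hn]; exact hey) h1 h2
  have hRx : ∀ e, R e → x ∈ ends e ∧ e ∈ insert e0 F := by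
    rintro e ⟨n, f, h0, hn, hs⟩
    rcases n with _ | n
    · rw [← hn, h0]; exact ⟨hx0, mem_insert_self _ _⟩
    · have := hs n (by omega)
      rw [hn] at this
      exact ⟨this.2.1, mem_insert_of_mem this.1⟩
  have claimB : ∀ e e' y y' γ, R e → R e' → ends e = s(x, y) → ends e' = s(x, y') → y ≠ y' →
      Miss ends K F c y γ → ¬ Miss ends K F c y' γ := by
    intro e e' y y' γ hR hR' hey hey' hyy hy hy'
    have hxy : x ≠ y := by
      rintro rfl
      exact hnd e (hRx e hR).2 (by rw [hey]; simp)
    have hxy' : x ≠ y' := by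
      rintro rfl
      exact hnd e' (hRx e' hR').2 (by rw [hey']; simp)
    obtain ⟨c', S, hc', hyS, hxS, hout, hin⟩ := kempe F c hc γ β hy.1 hβ.1 x y y' hxy hxy' hyy hβ hy hy'
    have hMin : ∀ v ∈ S, Miss ends K F c v γ → Miss ends K F c' v β := by
      intro v hv hm
      refine ⟨hβ.1, fun e he hve h => ?_⟩
      rw [hin e he v hve hv] at h
      have : c e = γ := by
        have := (Equiv.swap γ β).injective (h.trans (Equiv.swap_apply_left γ β).symm)
        exact this
      exact hm.2 e he hve this
    have hMout : ∀ v ∉ S, ∀ δ, Miss ends K F c v δ → Miss ends K F c' v δ := by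
      intro v hv δ hm
      refine ⟨hm.1, fun e he hve h => ?_⟩
      rw [hout e he v hve hv] at h
      exact hm.2 e he hve h
    have hMin' : ∀ v ∈ S, ∀ δ, δ ≠ γ → δ ≠ β → Miss ends K F c v δ → Miss ends K F c' v δ := by
      intro v hv δ h1 h2 hm
      refine ⟨hm.1, fun e he hve h => ?_⟩
      rw [hin e he v hve hv] at h
      have : c e = δ := by
        have := (Equiv.swap γ β).injective (h.trans (Equiv.swap_apply_of_ne_of_ne h1 h2).symm)
        exact this
      exact hm.2 e he hve this
    -- generic finish
    have fin : ∀ e y, R e → ends e = s(x, y) → y ∈ S → Miss ends K F c y γ → False := by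
      rintro e y ⟨n, f, h0, hn, hs⟩ hey hyS hy
      have hex : ∃ i, i ≤ n ∧ ∃ z, ends (f i) = s(x, z) ∧ z ∈ S ∧ Miss ends K F c z γ :=
        ⟨n, le_rfl, y, by rw [hn]; exact hey, hyS, hy⟩
      obtain ⟨hi, z, hz, hzS, hzm⟩ := Nat.find_spec hex
      have hmin := fun j => Nat.find_min hex (m := j)
      set i := Nat.find hex
      apply hcon
      rw [← h0]
      refine shift_fan x i F c' f β z hc' (by rw [h0]; exact he0) ?_ hz (hMout x hxS β hβ)
        (hMin z hzS hzm)
      intro j hj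
      obtain ⟨ha, hb, t, ht, hmt⟩ := hs j (by omega)
      refine ⟨ha, hb, t, ht, ?_⟩
      rw [hout _ ha x hb hxS]
      by_cases htS : t ∈ S
      · apply hMin' t htS _ _ _ hmt
        · intro h
          rw [h] at hmt
          exact hmin j hj ⟨by omega, t, ht, htS, hmt⟩
        · exact hβ.2 _ ha hb
      · exact hMout t htS _ hmt
    rcases hyS with h | h
    · exact fin e y hR hey h hy
    · exact fin e' y' hR' hey' h hy'
  -- counting
  have hR0 : R e0 := ⟨0, fun _ => e0, rfl, rfl, by simp⟩
  let RF : Finset E := (insert e0 F).filter R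
  let Y : Finset W := univ.filter fun y => ∃ e, R e ∧ ends e = s(x, y)
  have hYx : ∀ y ∈ Y, y ≠ x := by
    intro y hy
    simp only [Y, mem_filter, mem_univ, true_and] at hy
    obtain ⟨e, hR, he⟩ := hy
    rintro rfl
    exact hnd e (hRx e hR).2 (by rw [he]; simp)
  have hcard1 : #(Y.biUnion M) = ∑ y ∈ Y, #(M y) := by
    apply card_biUnion
    intro y hy y' hy' hne
    rw [mem_coe] at hy hy'
    simp only [Y, mem_filter, mem_univ, true_and] at hy hy'
    obtain ⟨e, hR, he⟩ := hy
    obtain ⟨e', hR', he'⟩ := hy'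
    simp only [Function.onFun, disjoint_left, hM]
    intro γ h1
    exact claimB e e' y y' γ hR hR' he he' hne h1
  have hsub : Y.biUnion M ⊆ (RF.erase e0).image c := by
    intro γ hγ
    rw [mem_biUnion] at hγ
    obtain ⟨y, hy, hγ⟩ := hγ
    rw [hM] at hγ
    simp only [Y, mem_filter, mem_univ, true_and] at hy
    obtain ⟨e, hR, he⟩ := hy
    have hnx : ¬ Miss ends K F c x γ := fun h => claimA e y γ hR he h hγ
    unfold Miss at hnx
    push Not at hnx
    obtain ⟨e', h1, h2, h3⟩ := hnx hγ.1
    rw [mem_image]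
    refine ⟨e', ?_, h3⟩
    simp only [RF, mem_erase, mem_filter, mem_insert]
    refine ⟨fun h => he0 (h ▸ h1), Or.inr h1, ?_⟩
    obtain ⟨n, f, h0, hn, hs⟩ := hR
    refine ⟨n+1, fun k => if k ≤ n then f k else e', by simpa using h0, by simp, ?_⟩
    intro i hi
    by_cases hin : i < n
    · have : i + 1 ≤ n := hin
      simp only [hin.le, this, if_true]
      exact hs i hin
    · have : i = n := by omega
      subst this
      simp only [le_refl, if_true, Nat.not_succ_le_self, if_false]
      exact ⟨h1, h2, y, by rw [hn]; exact he, by rw [h3]; exact hγ⟩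
  have hcard2 : #RF ≤ ∑ y ∈ Y, #{e ∈ insert e0 F | ends e = s(x, y)} := by
    have : RF ⊆ Y.biUnion fun y => {e ∈ insert e0 F | ends e = s(x, y)} := by
      intro e he
      simp only [RF, mem_filter] at he
      obtain ⟨y, hy⟩ := Sym2.mem_iff_exists.1 (hRx e he.2).1
      rw [mem_biUnion]
      refine ⟨y, ?_, ?_⟩
      · simp only [Y, mem_filter, mem_univ, true_and]; exact ⟨e, he.2, hy⟩
      · simp only [mem_filter]; exact ⟨he.1, hy⟩
    exact (card_le_card this).trans card_biUnion_le
  have hcard3 : ∑ y ∈ Y, #{e ∈ insert e0 F | ends e = s(x, y)} ≤ ∑ y ∈ Y, #(M y) := by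
    apply sum_le_sum
    intro y hy
    have h1 := hm y (hYx y hy)
    have h2 := hMc y
    have h3 : #{e ∈ F | y ∈ ends e} ≤ #{e ∈ insert e0 F | y ∈ ends e} :=
      card_le_card (filter_subset_filter _ (subset_insert _ _))
    omega
  have hcard4 := (card_le_card hsub).trans card_image_le
  have he0R : e0 ∈ RF := by simp only [RF, mem_filter]; exact ⟨mem_insert_self _ _, hR0⟩
  rw [card_erase_of_mem he0R] at hcard4
  have := card_pos.2 ⟨_, he0R⟩
  omega

open Classical in
theorem vizing [Fintype W] (ends : E → Sym2 W) (K : ℕ) (F0 : Finset E)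
    (hnd : ∀ e ∈ F0, ¬ (ends e).IsDiag)
    (hdeg : ∀ x, #{e ∈ F0 | x ∈ ends e} ≤ K)
    (hm : ∀ e ∈ F0, ∃ x ∈ ends e, ∀ y, y ≠ x →
      #{e ∈ F0 | y ∈ ends e} + #{e ∈ F0 | ends e = s(x, y)} ≤ K) :
    ∃ c, PC ends K F0 c := by
  have : ∀ F : Finset E, F ⊆ F0 → ∃ c, PC ends K F c := by
    intro F
    induction F using Finset.induction_on with
    | empty => intro _; exact ⟨fun _ => 0, by simp [PC]⟩
    | insert e F he ih =>
      intro hF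
      obtain ⟨c, hc⟩ := ih ((subset_insert _ _).trans hF)
      obtain ⟨x, hx, hy⟩ := hm e (hF (mem_insert_self _ _))
      apply vizing_step F c hc e he x hx (fun e he => hnd e (hF he))
      · exact (card_le_card (filter_subset_filter _ hF)).trans (hdeg x)
      · intro y hyx
        refine le_trans (Nat.add_le_add ?_ ?_) (hy y hyx)
        · exact card_le_card (filter_subset_filter _ hF)
        · exact card_le_card (filter_subset_filter _ hF)
  exact this F0 subset_rfl
end viz
end AVD

namespace AVD
open Finset

open Classical in
theorem count_pairs {I C : Type*} [Fintype I] [Fintype C] (A : Finset (I → Option C)) (X : Finset C)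
    (hX : #X ≤ 19) (Q : Finset C → Finset C) (j0 j1 : I)
    (hinj : ∀ f ∈ A, ∀ f' ∈ A, f j0 = f' j0 → f j1 = f' j1 → f = f')
    (hA : ∀ f ∈ A, ∃ J ⊆ X, ∃ e0 ∈ Q J, ∃ e1 ∈ Q J, f j0 = some e0 ∧ f j1 = some e1 ∧ #(Q J) ≤ 19) :
    #A ≤ 2 ^ 19 * 19 ^ 2 := by
  let B : Finset (Option C × Option C) := (X.powerset.filter fun J => #(Q J) ≤ 19).biUnion
    fun J => ((Q J) ×ˢ (Q J)).image fun p => (some p.1, some p.2)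
  have h1 : #A ≤ #B := by
    apply card_le_card_of_injOn (fun f => (f j0, f j1))
    · intro f hf
      obtain ⟨J, hJ, e0, h0, e1, h1, h2, h3, h4⟩ := hA f hf
      simp only [B, coe_biUnion, Set.mem_iUnion, mem_coe, mem_image, mem_filter, mem_powerset,
        mem_product]
      exact ⟨J, ⟨hJ, h4⟩, (e0, e1), ⟨h0, h1⟩, by simp [h2, h3]⟩
    · intro f hf f' hf' h
      simp only [Prod.mk.injEq] at h
      exact hinj f hf f' hf' h.1 h.2
  have h2 : #B ≤ #(X.powerset.filter fun J => #(Q J) ≤ 19) * 19 ^ 2 := by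
    apply card_biUnion_le_card_mul
    intro J hJ
    refine card_image_le.trans ?_
    rw [card_product, sq]
    have := (mem_filter.1 hJ).2
    exact Nat.mul_le_mul this this
  have h3 : #(X.powerset.filter fun J => #(Q J) ≤ 19) ≤ 2 ^ 19 := by
    refine (card_filter_le _ _).trans ?_
    rw [card_powerset]
    exact Nat.pow_le_pow_right (by norm_num) hX
  calc _ ≤ _ := h1
    _ ≤ _ := h2
    _ ≤ _ := Nat.mul_le_mul_right _ h3

section high
variable {U V W : Type*} [Fintype U] [Fintype V] (ν : U → V) (π : V → W)
  (A : U → Finset (Sym2 V)) (c0 : Sym2 V → ℕ) (Adj : U → U → Prop)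

open Classical in
noncomputable def Hf (f : U × Bool → Option (Sym2 V)) (x : V) : Finset (Sym2 V) :=
  univ.filter fun e => x ∈ e ∧ ∃ j, f j = some e

open Classical in
noncomputable def Inn (f : U × Bool → Option (Sym2 V)) (y : W) : Finset (U × Bool) :=
  univ.filter fun j => π (ν j.1) ≠ y ∧ ∃ e, f j = some e ∧ y ∈ Sym2.map π e

open Classical in
def Conf (f : U × Bool → Option (Sym2 V)) (u v : U) : Prop :=
  ∃ e0 e1 Ju Jv, f (u, false) = some e0 ∧ f (u, true) = some e1 ∧ Ju ⊆ Hf f (ν u) ∧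
    Jv ⊆ Hf f (ν v) ∧ e0 ∈ Ju ∧ e1 ∈ Ju ∧ (A u \ Ju).image c0 = (A v \ Jv).image c0

def BadH (f : U × Bool → Option (Sym2 V)) : Prop :=
  (∃ y, 15 < #(Inn ν π f y)) ∨ ∃ u v, Adj u v ∧ Conf ν A c0 f u v

theorem Hf_mono (f g : U × Bool → Option (Sym2 V)) (h : ∀ i c, f i = some c → g i = some c) (x : V) :
    Hf f x ⊆ Hf g x := by
  intro e he
  simp only [Hf, mem_filter, mem_univ, true_and] at he ⊢
  obtain ⟨h1, j, hj⟩ := he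
  exact ⟨h1, j, h _ _ hj⟩

theorem Inn_mono (f g : U × Bool → Option (Sym2 V)) (h : ∀ i c, f i = some c → g i = some c) (y : W) :
    Inn ν π f y ⊆ Inn ν π g y := by
  intro e he
  simp only [Inn, mem_filter, mem_univ, true_and] at he ⊢
  obtain ⟨h1, j, hj, h2⟩ := he
  exact ⟨h1, j, h _ _ hj, h2⟩

theorem BadH_mono (f g : U × Bool → Option (Sym2 V)) (h : ∀ i c, f i = some c → g i = some c)
    (hb : BadH ν π A c0 Adj f) : BadH ν π A c0 Adj g := by
  rcases hb with ⟨y, hy⟩ | ⟨u, v, huv, e0, e1, Ju, Jv, h0, h1, h2, h3, h4⟩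
  · left; exact ⟨y, lt_of_lt_of_le hy (card_le_card (Inn_mono ν π f g h y))⟩
  · right
    exact ⟨u, v, huv, e0, e1, Ju, Jv, h _ _ h0, h _ _ h1, h2.trans (Hf_mono f g h _),
      h3.trans (Hf_mono f g h _), h4⟩

theorem card_Hf (hπ : Function.Injective (fun u => π (ν u)))
    (f : U × Bool → Option (Sym2 V)) (u : U) (h : #(Inn ν π f (π (ν u))) ≤ 15) :
    #(Hf f (ν u)) ≤ 17 := by
  classical
  let B : Finset (U × Bool) := Inn ν π f (π (ν u)) ∪ {(u, false), (u, true)}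
  have hB : #B ≤ 17 := (card_union_le _ _).trans (by
    have : #({(u, false), (u, true)} : Finset (U × Bool)) ≤ 2 := card_le_two
    omega)
  have hs : Hf f (ν u) ⊆ B.biUnion fun j => (f j).toFinset := by
    intro e he
    simp only [Hf, mem_filter, mem_univ, true_and] at he
    obtain ⟨h1, j, hj⟩ := he
    rw [mem_biUnion]
    refine ⟨j, ?_, by simp [hj]⟩
    by_cases hju : j.1 = u
    · apply mem_union_right
      obtain ⟨j1, b⟩ := j
      simp only at hju
      subst hju
      cases b <;> simp
    · apply mem_union_left
      simp only [Inn, mem_filter, mem_univ, true_and]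
      exact ⟨fun h => hju (hπ h), e, hj, Sym2.mem_map.2 ⟨_, h1, rfl⟩⟩
  calc _ ≤ _ := card_le_card hs
    _ ≤ #B * 1 := card_biUnion_le_card_mul _ _ _ (by
      intro j _
      cases f j <;> simp)
    _ ≤ 17 := by omega

open Classical in
theorem fib_conf (hπ : Function.Injective (fun u => π (ν u)))
    (hA : ∀ u, ∀ e ∈ A u, ν u ∈ e)
    (hA2 : ∀ u x, ∀ e ∈ A x, ν u ∈ e → e ∈ A u) (hc : ∀ u, Set.InjOn c0 (A u))
    (w : U × Bool) (u v : U) (huv : u ≠ v) (e : Sym2 V) (g : U × Bool → Option (Sym2 V)) :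
    #(univ.filter fun f : U × Bool → Option (Sym2 V) => (∀ i c, f i = some c → c ∈ A i.1) ∧
      ¬ BadH ν π A c0 Adj (Function.update f w none) ∧ Conf ν A c0 f u v ∧
      (w.1 = u ∨ f w = some e) ∧ ∀ i, i ≠ w → i.1 ≠ u → f i = g i) ≤ 2 ^ 19 * 19 ^ 2 := by
  set Fb := univ.filter fun f : U × Bool → Option (Sym2 V) => (∀ i c, f i = some c → c ∈ A i.1) ∧
      ¬ BadH ν π A c0 Adj (Function.update f w none) ∧ Conf ν A c0 f u v ∧
      (w.1 = u ∨ f w = some e) ∧ ∀ i, i ≠ w → i.1 ≠ u → f i = g i with hFb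
  have hν : Function.Injective ν := fun a b h => hπ (by simp [h])
  rcases Fb.eq_empty_or_nonempty with h | ⟨f₀, hf₀⟩
  · rw [h]; simp
  let g' : U × Bool → Option (Sym2 V) := fun i => if i = w ∨ i.1 = u then none else g i
  have hcap : ∀ f ∈ Fb, ∀ x, #(Hf (Function.update f w none) (ν x)) ≤ 17 := by
    intro f hf x
    apply card_Hf ν π hπ
    by_contra hcon
    push Not at hcon
    exact (mem_filter.1 hf).2.2.1 (Or.inl ⟨_, hcon⟩)
  let X := Hf g' (ν v) ∪ {s(ν u, ν v), e}
  have hX : #X ≤ 19 := by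
    refine (card_union_le _ _).trans ?_
    have h2 : #({s(ν u, ν v), e} : Finset (Sym2 V)) ≤ 2 := card_le_two
    have h3 : Hf g' (ν v) ⊆ Hf (Function.update f₀ w none) (ν v) := by
      apply Hf_mono
      intro i c hi
      simp only [g'] at hi
      split_ifs at hi with h
      push Not at h
      rw [Function.update_of_ne h.1, (mem_filter.1 hf₀).2.2.2.2.2 i h.1 h.2, hi]
    have := (card_le_card h3).trans (hcap f₀ hf₀ v)
    omega
  have hHf : ∀ (f : U × Bool → Option (Sym2 V)) x, Hf f x ⊆ Hf (Function.update f w none) x ∪ (f w).toFinset := by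
    intro f x e' he'
    simp only [Hf, mem_filter, mem_univ, true_and, mem_union] at he' ⊢
    obtain ⟨h1, j, hj⟩ := he'
    by_cases h : j = w
    · right; rw [← h, hj]; simp
    · left; exact ⟨h1, j, by rw [Function.update_of_ne h, hj]⟩
  have hQJ : ∀ Ju Jv, Ju ⊆ A u → (A u \ Ju).image c0 = (A v \ Jv).image c0 →
      (A u).filter (fun e => c0 e ∉ (A v \ Jv).image c0) = Ju := by
    intro Ju Jv hs h
    rw [← h]
    ext e'
    simp only [mem_filter, mem_image, mem_sdiff, not_exists, not_and]
    constructor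
    · rintro ⟨h1, h2⟩
      by_contra h3
      exact h2 e' ⟨h1, h3⟩ rfl
    · intro h1
      refine ⟨hs h1, fun x hx hxe => ?_⟩
      rw [hc u hx.1 (hs h1) hxe] at hx
      exact hx.2 h1
  refine count_pairs Fb X hX (fun J => (A u).filter fun e => c0 e ∉ (A v \ J).image c0)
    (u, false) (u, true) ?_ ?_
  · intro f hf f' hf' h0 h1
    obtain ⟨-, -, -, -, hw, hg⟩ := mem_filter.1 hf
    obtain ⟨-, -, -, -, hw', hg'⟩ := mem_filter.1 hf'
    have hu : ∀ i : U × Bool, i.1 = u → f i = f' i := by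
      rintro ⟨a, b⟩ rfl
      cases b
      · exact h0
      · exact h1
    funext i
    by_cases hi : i.1 = u
    · exact hu i hi
    by_cases hi' : i = w
    · subst hi'
      rw [hw.resolve_left hi, hw'.resolve_left hi]
    · rw [hg i hi' hi, hg' i hi' hi]
  · intro f hf
    obtain ⟨-, hval, hb, ⟨e0, e1, Ju, Jv, h0, h1, hJu, hJv, he0, he1, heq⟩, hw, hg⟩ := mem_filter.1 hf
    have hJuA : Ju ⊆ A u := by
      intro e' he'
      have := hJu he'
      simp only [Hf, mem_filter, mem_univ, true_and] at this
      obtain ⟨h1, j, hj⟩ := this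
      exact hA2 _ _ _ (hval _ _ hj) h1
    have hQ := hQJ Ju Jv hJuA heq
    refine ⟨Jv, ?_, e0, ?_, e1, ?_, h0, h1, ?_⟩
    · intro e' he'
      have := hJv he'
      simp only [Hf, mem_filter, mem_univ, true_and] at this
      obtain ⟨h1, j, hj⟩ := this
      simp only [X, mem_union, mem_insert, mem_singleton]
      by_cases hju : j.1 = u
      · right; left
        have h2 := hA _ _ (hval _ _ hj)
        rw [hju] at h2
        exact (Sym2.mem_and_mem_iff (hν.ne huv)).1 ⟨h2, h1⟩
      by_cases hjw : j = w
      · right; right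
        subst hjw
        rw [hw.resolve_left hju] at hj
        exact (Option.some.inj hj).symm
      · left
        simp only [Hf, mem_filter, mem_univ, true_and]
        refine ⟨h1, j, ?_⟩
        simp only [g', hju, hjw, or_self, if_false]
        rw [← hg j hjw hju, hj]
    · rw [hQ]; exact he0
    · rw [hQ]; exact he1
    · rw [hQ]
      calc #Ju ≤ _ := card_le_card (hJu.trans (hHf f (ν u)))
        _ ≤ _ := card_union_le _ _
        _ ≤ 17 + 1 := Nat.add_le_add (hcap f hf u) (by cases f w <;> simp)
        _ ≤ 19 := by norm_num

theorem high_num (m D : ℕ) (h1 : 9 * D ≤ 20 * m) (h2 : m ≤ D) (hD : 10 ^ 12 ≤ D) :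
    (9 / 10 * m : ℝ) + ((m * (2 * D).choose 15 : ℝ) * (1 / (9 / 10 * m : ℝ) ^ 15) +
      (D * (189267968 / (9 / 10 * m : ℝ) ^ 1) +
        (m * (4 * D) : ℝ) * (189267968 / (9 / 10 * m : ℝ) ^ 2))) ≤ m := by
  have h1' : (9 * D : ℝ) ≤ 20 * m := by exact_mod_cast h1
  have hD' : (10 ^ 12 : ℝ) ≤ D := by exact_mod_cast hD
  have hm : (45 / 100 * 10 ^ 12 : ℝ) ≤ m := by linarith
  have hm0 : (0 : ℝ) < m := by linarith
  have hch : ((2 * D).choose 15 : ℝ) ≤ (2 * D : ℝ) ^ 15 / (Nat.factorial 15 : ℕ) := by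
    have := Nat.choose_le_pow_div (α := ℝ) 15 (2 * D)
    push_cast at this ⊢
    exact this
  have hch2 : ((2 * D).choose 15 : ℝ) ≤ (40 / 9 * m : ℝ) ^ 15 / (Nat.factorial 15 : ℕ) := by
    refine hch.trans ?_
    have : (2 * D : ℝ) ≤ 40 / 9 * m := by linarith
    gcongr
  have e1 : (m * (2 * D).choose 15 : ℝ) * (1 / (9 / 10 * m : ℝ) ^ 15) ≤ 2 / 100 * m := by
    rw [mul_one_div, div_le_iff₀ (by positivity)]
    calc (m * (2 * D).choose 15 : ℝ) ≤ m * ((40 / 9 * m : ℝ) ^ 15 / (Nat.factorial 15 : ℕ)) := by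
          gcongr
      _ = (m * (m : ℝ) ^ 15) * ((40 / 9) ^ 15 / (Nat.factorial 15 : ℕ)) := by
          rw [mul_pow]; ring
      _ ≤ (m * (m : ℝ) ^ 15) * (2 / 100 * (9 / 10) ^ 15) := by
          gcongr
          norm_num [Nat.factorial]
      _ = _ := by rw [mul_pow]; ring
  have hDm : (D : ℝ) ≤ 20 / 9 * m := by linarith
  have e2 : (D * (189267968 / (9 / 10 * m : ℝ) ^ 1)) ≤ 189267968 * 3 := by
    rw [pow_one, ← mul_div_assoc, div_le_iff₀ (by positivity)]
    nlinarith
  have e3 : (m * (4 * D) : ℝ) * (189267968 / (9 / 10 * m : ℝ) ^ 2) ≤ 189267968 * 12 := by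
    rw [← mul_div_assoc, div_le_iff₀ (by positivity)]
    have : (m : ℝ) * D ≤ m * (20 / 9 * m) := by gcongr
    nlinarith
  have : (189267968 * 15 : ℝ) ≤ 8 / 100 * m := by
    refine le_trans ?_ (mul_le_mul_of_nonneg_left hm (by norm_num))
    norm_num
  linarith

open Classical in
theorem high_stage (hπ : Function.Injective (fun u => π (ν u)))
    (hA : ∀ u, ∀ e ∈ A u, ν u ∈ e) (hA2 : ∀ u x, ∀ e ∈ A x, ν u ∈ e → e ∈ A u)
    (hc : ∀ u, Set.InjOn c0 (A u)) (hirr : ∀ u v, Adj u v → u ≠ v)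
    (O : U → Finset (Sym2 V)) (hOA : ∀ u, O u ⊆ A u) (m D : ℕ) (hO : ∀ u, #(O u) = m)
    (h1 : 9 * D ≤ 20 * m) (h2 : m ≤ D) (hD : 10 ^ 12 ≤ D)
    (hin : ∀ y, #(univ.filter fun p : U × Sym2 V => p.2 ∈ O p.1 ∧ π (ν p.1) ≠ y ∧
      y ∈ Sym2.map π p.2) ≤ D)
    (hadj : ∀ u, #(univ.filter fun v => Adj u v) ≤ D)
    (hadj2 : ∀ e : Sym2 V, #(univ.filter fun p : U × U => Adj p.1 p.2 ∧ (ν p.1 ∈ e ∨ ν p.2 ∈ e)) ≤ 4 * D) :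
    ∃ f : U × Bool → Sym2 V, (∀ j, f j ∈ O j.1) ∧
      ¬ BadH ν π A c0 Adj (fun j => some (f j)) := by
  let Inc : W → Finset ((U × Bool) × Sym2 V) := fun y => univ.filter fun p =>
    p.2 ∈ O p.1.1 ∧ π (ν p.1.1) ≠ y ∧ y ∈ Sym2.map π p.2
  have hInc : ∀ y, #(Inc y) ≤ 2 * D := by
    intro y
    have : #(Inc y) ≤ #((univ : Finset Bool) ×ˢ (univ.filter fun p : U × Sym2 V => p.2 ∈ O p.1 ∧
        π (ν p.1) ≠ y ∧ y ∈ Sym2.map π p.2)) := by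
      apply card_le_card_of_injOn (fun p => (p.1.2, (p.1.1, p.2)))
      · intro p hp
        simpa [Inc] using hp
      · rintro ⟨⟨a, b⟩, c⟩ _ ⟨⟨a', b'⟩, c'⟩ _ h
        simp only [Prod.mk.injEq] at h
        simp [h]
    rw [card_product] at this
    have h3 := hin y
    simp only [card_univ, Fintype.card_bool] at this
    omega
  let oth : U → Sym2 V → W := fun a e => if h : ν a ∈ e then π (Sym2.Mem.other h) else π (ν a)
  have hoth : ∀ a e y, ν a ∈ e → y ∈ Sym2.map π e → π (ν a) ≠ y → oth a e = y := by
    intro a e y ha hy hne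
    simp only [oth, ha, dif_pos]
    rw [← Sym2.other_spec ha, Sym2.map_mk, Sym2.mem_iff] at hy
    rcases hy with hy | hy
    · exact absurd hy.symm hne
    · exact hy.symm
  let Ev1 : U × Bool → Finset (Sym2 V × Finset ((U × Bool) × Sym2 V)) := fun w =>
    (O w.1).biUnion fun e => (((Inc (oth w.1 e)).powersetCard 15).filter
      fun S => #(S.image Prod.fst) = 15).image fun S => (e, S)
  have hEv1 : ∀ w, #(Ev1 w) ≤ m * (2 * D).choose 15 := by
    intro w
    rw [← hO w.1]
    apply card_biUnion_le_card_mul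
    intro e _
    refine card_image_le.trans ((card_filter_le _ _).trans ?_)
    rw [card_powersetCard]
    exact Nat.choose_le_choose _ (hInc _)
  let Ev2 : U × Bool → Finset U := fun w => univ.filter fun v => Adj w.1 v
  let Ev3 : U × Bool → Finset (Sym2 V × U × U) := fun w =>
    (O w.1).biUnion fun e => ((univ.filter fun p : U × U => Adj p.1 p.2 ∧
      (ν p.1 ∈ e ∨ ν p.2 ∈ e)).filter fun p => p.1 ≠ w.1).image fun p => (e, p)
  have hEv3 : ∀ w, #(Ev3 w) ≤ m * (4 * D) := by
    intro w
    rw [← hO w.1]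
    apply card_biUnion_le_card_mul
    intro e _
    refine card_image_le.trans ((card_filter_le _ _).trans (hadj2 e))
  have hm0 : 0 < m := by omega
  have hβ : (0 : ℝ) < 9 / 10 * m := by positivity
  refine ww3 (fun j => O j.1) (BadH ν π A c0 Adj) (BadH_mono ν π A c0 Adj) ?_ (9 / 10 * m) hβ
    Ev1 (fun _ p => p.2.image Prod.fst)
    (fun w p f => f w = some p.1 ∧ ∀ q ∈ p.2, f q.1 = some q.2)
    Ev2 (fun w _ => {(w.1, !w.2)}) (fun w v f => Conf ν A c0 f w.1 v)
    Ev3 (fun _ p => {(p.2.1, false), (p.2.1, true)})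
    (fun w p f => Conf ν A c0 f p.2.1 p.2.2 ∧ f w = some p.1)
    (fun _ => m * (2 * D).choose 15) (fun _ => D) (fun _ => m * (4 * D))
    1 (2 ^ 19 * 19 ^ 2) (2 ^ 19 * 19 ^ 2) 15 1 2 ?_ ?_ ?_ ?_ ?_
  · rintro (⟨y, hy⟩ | ⟨u, v, -, e0, e1, -, -, h, -⟩)
    · simp [Inn] at hy
    · simp at h
  · intro w
    refine ⟨hEv1 w, ?_, ?_⟩
    · intro p hp
      simp only [Ev1, mem_biUnion, mem_image, mem_filter] at hp
      obtain ⟨e, _, S, ⟨_, hS⟩, rfl⟩ := hp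
      exact hS
    · rintro ⟨e, S⟩ hτ g B hB
      rw [card_le_one]
      intro f hf f' hf'
      obtain ⟨-, -, -, ⟨hp, hq⟩, hg⟩ := hB f hf
      obtain ⟨-, -, -, ⟨hp', hq'⟩, hg'⟩ := hB f' hf'
      funext i
      by_cases hi : i = w
      · rw [hi, hp, hp']
      by_cases hi' : i ∈ S.image Prod.fst
      · obtain ⟨q, hqS, rfl⟩ := mem_image.1 hi'
        rw [hq q hqS, hq' q hqS]
      · rw [hg i hi hi', hg' i hi hi']
  · intro w
    refine ⟨hadj w.1, fun _ _ => card_singleton _, ?_⟩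
    intro v hτ g B hB
    have huv : Adj w.1 v := (mem_filter.1 hτ).2
    have := fib_conf ν π A c0 Adj hπ hA hA2 hc w w.1 v (hirr _ _ huv) s(ν v, ν v) g
    refine le_trans (card_le_card ?_) this
    intro f hf
    obtain ⟨hval, -, hb, hp, hg⟩ := hB f hf
    refine mem_filter.2 ⟨mem_univ _, fun i c h => hOA _ (hval i c h), ?_, hp, Or.inl rfl, ?_⟩
    · convert hb
    intro i hi hi'
    apply hg i hi
    rw [mem_singleton]
    rintro rfl
    exact hi' rfl
  · intro w
    refine ⟨hEv3 w, fun p _ => card_pair (by simp), ?_⟩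
    rintro ⟨e, u, v⟩ hτ g B hB
    have huv : Adj u v := by
      simp only [Ev3, mem_biUnion, mem_image, mem_filter, mem_univ,
        true_and] at hτ
      obtain ⟨e', _, p, ⟨⟨hp, _⟩, _⟩, heq⟩ := hτ
      simp only [Prod.mk.injEq] at heq
      rw [heq.2] at hp
      exact hp
    have := fib_conf ν π A c0 Adj hπ hA hA2 hc w u v (hirr _ _ huv) e g
    refine le_trans (card_le_card ?_) this
    intro f hf
    obtain ⟨hval, -, hb, hp, hg⟩ := hB f hf
    refine mem_filter.2 ⟨mem_univ _, fun i c h => hOA _ (hval i c h), ?_, hp.1, Or.inr hp.2, ?_⟩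
    · convert hb
    intro i hi hi'
    apply hg i hi
    simp only [mem_insert, mem_singleton]
    rintro (rfl | rfl) <;> exact hi' rfl
  · intro w f hval hw hb hnb
    obtain ⟨e, he⟩ := Option.ne_none_iff_exists'.1 hw
    have heO := hval _ _ he
    have hwe := hA _ _ (hOA _ heO)
    rcases hb with ⟨y, hy⟩ | ⟨u, v, huv, hconf⟩
    · have hy' : #(Inn ν π (Function.update f w none) y) ≤ 15 := by
        by_contra hcon
        push Not at hcon
        exact hnb (Or.inl ⟨y, hcon⟩)
      have hsub : (Inn ν π f y).erase w ⊆ Inn ν π (Function.update f w none) y := by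
        intro j hj
        rw [mem_erase] at hj
        simp only [Inn, mem_filter, mem_univ, true_and] at hj ⊢
        obtain ⟨h0, h3, e', h4, h5⟩ := hj
        exact ⟨h3, e', by rw [Function.update_of_ne h0, h4], h5⟩
      have hwI : w ∈ Inn ν π f y := by
        by_contra hcon
        rw [erase_eq_of_notMem hcon] at hsub
        have := card_le_card hsub
        omega
      have hce : 15 ≤ #((Inn ν π f y).erase w) := by
        rw [card_erase_of_mem hwI]; omega
      obtain ⟨S', hS', hS'c⟩ := exists_subset_card_eq hce
      have hwy : oth w.1 e = y := by
        simp only [Inn, mem_filter, mem_univ, true_and] at hwI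
        obtain ⟨h3, e', h4, h5⟩ := hwI
        rw [he] at h4
        rw [← Option.some.inj h4] at h5
        exact hoth _ _ _ hwe h5 h3
      let S : Finset ((U × Bool) × Sym2 V) := S'.image fun j => (j, (f j).getD e)
      have hSfst : S.image Prod.fst = S' := by
        simp only [S, image_image]
        ext j; simp
      have hSm : ∀ q ∈ S, q.1 ∈ S' ∧ f q.1 = some q.2 ∧ π (ν q.1.1) ≠ y ∧ y ∈ Sym2.map π q.2 := by
        intro q hq
        simp only [S, mem_image] at hq
        obtain ⟨j, hj, rfl⟩ := hq
        have hj' := mem_of_mem_erase (hS' hj)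
        simp only [Inn, mem_filter, mem_univ, true_and] at hj'
        obtain ⟨h3, e', h4, h5⟩ := hj'
        simp only [h4, Option.getD_some]
        exact ⟨hj, trivial, h3, h5⟩
      refine Or.inl ⟨(e, S), ?_, ⟨he, fun q hq => (hSm q hq).2.1⟩, ?_, ?_⟩
      · simp only [Ev1, mem_biUnion, mem_image, mem_filter, mem_powersetCard]
        refine ⟨e, heO, S, ⟨⟨?_, ?_⟩, ?_⟩, rfl⟩
        · intro q hq
          obtain ⟨-, h3, h4, h5⟩ := hSm q hq
          simp only [Inc, mem_filter, mem_univ, true_and, hwy]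
          exact ⟨hval _ _ h3, h4, h5⟩
        · simp only [S]
          rw [card_image_of_injective _ (fun a b h => (Prod.mk.inj h).1), hS'c]
        · rw [hSfst, hS'c]
      · simp only [hSfst]
        intro h
        exact (mem_erase.1 (hS' h)).1 rfl
      · intro i hi
        simp only [mem_image] at hi
        obtain ⟨q, hq, rfl⟩ := hi
        rw [(hSm q hq).2.1]; simp
    · have hconf' := hconf
      obtain ⟨e0, e1, Ju, Jv, h0, h3, hJu, hJv, he0, he1, heq⟩ := hconf
      have hsome : ∀ b, f (u, b) ≠ none := by
        intro b
        cases b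
        · rw [h0]; simp
        · rw [h3]; simp
      by_cases hu : w.1 = u
      · subst hu
        refine Or.inr (Or.inl ⟨v, ?_, hconf', ?_, ?_⟩)
        · simp only [Ev2, mem_filter, mem_univ, true_and]
          exact huv
        · obtain ⟨a, b⟩ := w
          simp
        · intro i hi
          simp only [mem_singleton] at hi
          rw [hi]; exact hsome _
      · refine Or.inr (Or.inr ⟨(e, u, v), ?_, ⟨hconf', he⟩, ?_, ?_⟩)
        · simp only [Ev3, mem_biUnion, mem_image, mem_filter, mem_univ, true_and]
          refine ⟨e, heO, (u, v), ⟨⟨huv, ?_⟩, fun h => hu h.symm⟩, rfl⟩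
          by_contra hcon
          push Not at hcon
          have hH : ∀ x, x ∉ e → Hf f x ⊆ Hf (Function.update f w none) x := by
            intro x hx e' he'
            simp only [Hf, mem_filter, mem_univ, true_and] at he' ⊢
            obtain ⟨h4, j, hj⟩ := he'
            refine ⟨h4, j, ?_⟩
            rw [Function.update_of_ne, hj]
            rintro rfl
            rw [he] at hj
            rw [Option.some.inj hj] at hx
            exact hx h4
          have hne : ∀ b, (u, b) ≠ w := by
            rintro b rfl; exact hu rfl
          exact hnb (Or.inr ⟨u, v, huv, e0, e1, Ju, Jv, by rw [Function.update_of_ne (hne _), h0],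
            by rw [Function.update_of_ne (hne _), h3], hJu.trans (hH _ hcon.1),
            hJv.trans (hH _ hcon.2), he0, he1, heq⟩)
        · simp only [mem_insert, mem_singleton]
          rintro (h | h) <;> exact hu (by rw [h])
        · intro i hi
          simp only [mem_insert, mem_singleton] at hi
          rcases hi with rfl | rfl <;> exact hsome _
  · intro w
    simp only [hO]
    have := high_num m D h1 h2 hD
    push_cast
    exact this

end high
end AVD

namespace AVD
open Finset

section low
variable {V C : Type*} [Fintype V] [Fintype C] (L : SimpleGraph V) (B : V → Finset C)

open Classical in
noncomputable def SL (f : L.edgeSet → Option C) (u v : V) : Finset C :=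
  B u ∪ univ.filter fun c => ∃ e : L.edgeSet, u ∈ e.1 ∧ v ∉ e.1 ∧ f e = some c

def Rel (u v : V) (e : L.edgeSet) : Prop := (u ∈ e.1 ∧ v ∉ e.1) ∨ (v ∈ e.1 ∧ u ∉ e.1)

def CfL (f : L.edgeSet → Option C) (u v : V) : Prop :=
  L.Adj u v ∧ (∃ e, Rel L u v e) ∧ (∀ e, Rel L u v e → f e ≠ none) ∧ SL L B f u v = SL L B f v u

def ImpL (f : L.edgeSet → Option C) : Prop :=
  ∃ e e' : L.edgeSet, e ≠ e' ∧ (∃ x, x ∈ e.1 ∧ x ∈ e'.1) ∧ f e ≠ none ∧ f e = f e'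

def BadL (f : L.edgeSet → Option C) : Prop := ImpL L f ∨ ∃ u v, CfL L B f u v

theorem CfL_symm {f : L.edgeSet → Option C} {u v : V} (h : CfL L B f u v) : CfL L B f v u := by
  obtain ⟨h1, ⟨e, he⟩, h3, h4⟩ := h
  exact ⟨h1.symm, ⟨e, he.symm⟩, fun e he => h3 e he.symm, h4.symm⟩

theorem SL_congr (f g : L.edgeSet → Option C) (u v : V)
    (h : ∀ e : L.edgeSet, u ∈ e.1 → v ∉ e.1 → f e = g e) : SL L B f u v = SL L B g u v := by
  unfold SL
  congr 1
  ext c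
  simp only [mem_filter, mem_univ, true_and]
  constructor
  · rintro ⟨e, h1, h2, h3⟩; exact ⟨e, h1, h2, (h e h1 h2) ▸ h3⟩
  · rintro ⟨e, h1, h2, h3⟩; exact ⟨e, h1, h2, (h e h1 h2).symm ▸ h3⟩

theorem CfL_congr (f g : L.edgeSet → Option C) (u v : V)
    (h : ∀ e : L.edgeSet, Rel L u v e → f e = g e) (hf : CfL L B f u v) : CfL L B g u v := by
  obtain ⟨h1, h2, h3, h4⟩ := hf
  refine ⟨h1, h2, fun e he => h e he ▸ h3 e he, ?_⟩
  rw [← SL_congr L B f g u v fun e a b => h e (Or.inl ⟨a, b⟩),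
    ← SL_congr L B f g v u fun e a b => h e (Or.inr ⟨a, b⟩), h4]

theorem BadL_mono (f g : L.edgeSet → Option C) (h : ∀ i c, f i = some c → g i = some c)
    (hf : BadL L B f) : BadL L B g := by
  have h' : ∀ e, f e ≠ none → f e = g e := by
    intro e he
    obtain ⟨c, hc⟩ := Option.ne_none_iff_exists'.1 he
    rw [hc, h _ _ hc]
  rcases hf with ⟨e, e', h1, h2, h3, h4⟩ | ⟨u, v, hc⟩
  · left
    refine ⟨e, e', h1, h2, ?_, ?_⟩
    · rw [← h' e h3]; exact h3
    · rw [← h' e h3, ← h' e' (h4 ▸ h3)]; exact h4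
  · right
    exact ⟨u, v, CfL_congr L B f g u v (fun e he => h' e (hc.2.2.1 e he)) hc⟩

theorem three_nbrs (u x v z : V) (hx : L.Adj u x) (hv : L.Adj u v) (hz : L.Adj u z)
    (h1 : x ≠ v) (h2 : x ≠ z) (h3 : v ≠ z) [Fintype (L.neighborSet u)] : 3 ≤ L.degree u := by
  classical
  rw [← SimpleGraph.card_neighborFinset_eq_degree, ← card_eq_three.2 ⟨x, v, z, h1, h2, h3, rfl⟩]
  apply card_le_card
  intro y hy
  simp only [mem_insert, mem_singleton] at hy
  rw [SimpleGraph.mem_neighborFinset]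
  rcases hy with rfl | rfl | rfl <;> assumption

open Classical in
theorem low_stage (D : ℕ) (hD : 10 ^ 12 ≤ D) (hC : Fintype.card C = D + 19)
    (hdeg : ∀ v, 0 < L.degree v → 20 * (#(B v) + L.degree v) ≤ 9 * D) :
    ∃ f : L.edgeSet → C, (∀ e, ∀ v ∈ e.1, f e ∉ B v) ∧ ¬ BadL L B (fun e => some (f e)) := by
  let O : L.edgeSet → Finset C := fun e => univ.filter fun c => ∀ v ∈ e.1, c ∉ B v
  let E₁ : L.edgeSet → Finset L.edgeSet := fun w => univ.filter fun e => e ≠ w ∧ ∃ x, x ∈ e.1 ∧ x ∈ w.1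
  let E₂ : L.edgeSet → Finset (V × V) := fun w => univ.filter fun p =>
    p.1 ∈ w.1 ∧ p.2 ∉ w.1 ∧ L.Adj p.1 p.2 ∧ L.degree p.1 = 2
  let E₃ : L.edgeSet → Finset (V × V) := fun w => univ.filter fun p =>
    p.1 ∈ w.1 ∧ p.2 ∉ w.1 ∧ L.Adj p.1 p.2 ∧ 3 ≤ L.degree p.1
  have hpick : ∀ (w : L.edgeSet) (p : V × V), ∃ e : L.edgeSet, p ∈ E₃ w → e ≠ w ∧ p.1 ∈ e.1 ∧ p.2 ∉ e.1 := by
    intro w p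
    by_cases hp : p ∈ E₃ w
    · obtain ⟨-, h1, h2, h3, h4⟩ := mem_filter.1 hp
      obtain ⟨x, hx⟩ := Sym2.mem_iff_exists.1 h1
      have h5 : #({x, p.2} : Finset V) < #(L.neighborFinset p.1) := by
        have : #({x, p.2} : Finset V) ≤ 2 := card_le_two
        rw [SimpleGraph.card_neighborFinset_eq_degree]
        omega
      obtain ⟨z, hz, hz'⟩ := exists_mem_notMem_of_card_lt_card h5
      rw [SimpleGraph.mem_neighborFinset] at hz
      simp only [mem_insert, mem_singleton, not_or] at hz'
      refine ⟨⟨s(p.1, z), hz⟩, fun _ => ⟨?_, by simp, ?_⟩⟩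
      · intro h
        have h6 := congrArg Subtype.val h
        simp only at h6
        rw [hx] at h6
        exact hz'.1 (Sym2.congr_right.1 h6)
      · simp only [Sym2.mem_iff, not_or]
        exact ⟨h3.ne', fun h => hz'.2 h.symm⟩
    · exact ⟨w, fun h => absurd h hp⟩
  choose pick hpick using hpick
  have hD0 : (0 : ℝ) < D := by
    have : 0 < D := by omega
    exact_mod_cast this
  have hβ : (0 : ℝ) < 1 / 20 * D := by positivity
  have key := ww3 O (BadL L B) (BadL_mono L B) ?_ (1 / 20 * D) hβ
    E₁ (fun _ _ => ∅) (fun w e f => f w = f e)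
    E₂ (fun _ _ => ∅) (fun w p f => CfL L B f p.1 p.2)
    E₃ (fun w p => {pick w p}) (fun w p f => CfL L B f p.1 p.2 ∧ ¬ ImpL L f)
    (fun w => #(E₁ w)) (fun _ => 2) (fun _ => 2 * D) 1 1 4 0 0 1 ?_ ?_ ?_ ?_ ?_
  · obtain ⟨f, hf, hb⟩ := key
    exact ⟨f, fun e => (mem_filter.1 (hf e)).2, hb⟩
  · rintro (⟨e, e', -, -, h, -⟩ | ⟨u, v, -, ⟨e, he⟩, h, -⟩)
    · exact h rfl
    · exact h e he rfl
  · intro w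
    refine ⟨le_rfl, fun _ _ => rfl, ?_⟩
    intro e he g A hA
    have hew : e ≠ w := (mem_filter.1 he).2.1
    rw [card_le_one]
    intro f hf f' hf'
    obtain ⟨-, -, -, h1, h2⟩ := hA f hf
    obtain ⟨-, -, -, h1', h2'⟩ := hA f' hf'
    funext i
    by_cases hi : i = w
    · rw [hi, h1, h1', h2 e hew (notMem_empty _), h2' e hew (notMem_empty _)]
    · rw [h2 i hi (notMem_empty _), h2' i hi (notMem_empty _)]
  · intro w
    refine ⟨?_, fun _ _ => rfl, ?_⟩
    · obtain ⟨⟨a, b⟩, hab⟩ := w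
      change s(a, b) ∈ L.edgeSet at hab
      refine le_trans (card_le_card_of_injOn (t := {a, b}) Prod.fst ?_ ?_) card_le_two
      · intro p hp
        obtain ⟨-, hp1, -⟩ := mem_filter.1 hp
        have hp1 : p.1 ∈ s(a, b) := hp1
        simpa using hp1
      · rintro ⟨u, v⟩ hp ⟨u', v'⟩ hp' (rfl : u = u')
        obtain ⟨-, hp1, hp2, hp3, hp4⟩ := mem_filter.1 hp
        obtain ⟨-, hp1', hp2', hp3', hp4'⟩ := mem_filter.1 hp'
        simp only at *
        by_contra hne
        obtain ⟨x, hx⟩ := Sym2.mem_iff_exists.1 hp1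
        have hxa : L.Adj u x := by
          have hx' : s(a, b) = s(u, x) := hx
          have := hab
          rw [hx'] at this
          exact this
        have h3 := three_nbrs L u x v v' hxa hp3 hp3' (by rintro rfl; exact hp2 (hx ▸ by simp))
          (by rintro rfl; exact hp2' (hx ▸ by simp)) (by rintro rfl; exact hne rfl)
        omega
    · intro p hp g A hA
      obtain ⟨-, hp1, hp2, hp3, hp4⟩ := mem_filter.1 hp
      obtain ⟨u, v⟩ := p
      simp only at *
      obtain ⟨x, hx⟩ := Sym2.mem_iff_exists.1 hp1
      have hxa : L.Adj u x := by
        have := w.2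
        rw [hx] at this
        exact this
      have huniq : ∀ e : L.edgeSet, u ∈ e.1 → v ∉ e.1 → e = w := by
        intro e h1 h2
        obtain ⟨z, hz⟩ := Sym2.mem_iff_exists.1 h1
        have hza : L.Adj u z := by
          have := e.2
          rw [hz] at this
          exact this
        apply Subtype.ext
        rw [hx, hz]
        by_contra hne
        have h3 := three_nbrs L u x v z hxa hp3 hza (by rintro rfl; exact hp2 (hx ▸ by simp))
          (by rintro rfl; exact hne rfl) (by rintro rfl; exact h2 (hz ▸ by simp))
        omega
      rw [card_le_one]
      intro f hf f' hf'
      obtain ⟨hv, hn, -, h1, h2⟩ := hA f hf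
      obtain ⟨hv', hn', -, h1', h2'⟩ := hA f' hf'
      have hS : SL L B f u v = SL L B f' u v := by
        rw [h1.2.2.2, h1'.2.2.2]
        apply SL_congr
        intro e he _
        have : e ≠ w := by rintro rfl; exact hp2 he
        rw [h2 e this (notMem_empty _), h2' e this (notMem_empty _)]
      obtain ⟨c, hc⟩ := Option.ne_none_iff_exists'.1 hn
      have hcS : c ∈ SL L B f u v := by
        simp only [SL, mem_union, mem_filter, mem_univ, true_and]
        exact Or.inr ⟨w, hp1, hp2, hc⟩
      have hcB : c ∉ B u := (mem_filter.1 (hv w c hc)).2 u hp1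
      rw [hS] at hcS
      simp only [SL, mem_union, mem_filter, mem_univ, true_and] at hcS
      obtain ⟨e, he1, he2, he3⟩ := hcS.resolve_left hcB
      rw [huniq e he1 he2] at he3
      funext i
      by_cases hi : i = w
      · rw [hi, hc, he3]
      · rw [h2 i hi (notMem_empty _), h2' i hi (notMem_empty _)]
  · intro w
    refine ⟨?_, fun _ _ => card_singleton _, ?_⟩
    · obtain ⟨⟨a, b⟩, hab⟩ := w
      have hsub : E₃ ⟨s(a, b), hab⟩ ⊆ ({a, b} : Finset V).biUnion
          fun u => (L.neighborFinset u).image fun v => (u, v) := by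
        intro p hp
        obtain ⟨-, hp1, hp2, hp3, hp4⟩ := mem_filter.1 hp
        simp only [mem_biUnion, mem_image, SimpleGraph.mem_neighborFinset]
        exact ⟨p.1, by simpa using hp1, p.2, hp3, rfl⟩
      refine (card_le_card hsub).trans ?_
      refine (card_biUnion_le_card_mul _ _ D ?_).trans (Nat.mul_le_mul_right _ card_le_two)
      intro u _
      refine card_image_le.trans ?_
      rw [SimpleGraph.card_neighborFinset_eq_degree]
      rcases Nat.eq_zero_or_pos (L.degree u) with h | h
      · omega
      · have := hdeg u h; omega
    · intro p hp g A hA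
      obtain ⟨-, hp1, hp2, hp3, hp4⟩ := mem_filter.1 hp
      obtain ⟨u, v⟩ := p
      have hpk := hpick w (u, v) hp
      set e' := pick w (u, v) with he'
      simp only at *
      rcases A.eq_empty_or_nonempty with h | ⟨f₀, hf₀⟩
      · rw [h]; simp
      let R : Finset C := univ.filter fun c => c ∈ B u ∨
        ∃ e : L.edgeSet, u ∈ e.1 ∧ v ∉ e.1 ∧ e ≠ w ∧ e ≠ e' ∧ g e = some c
      let Y := SL L B f₀ u v \ R
      obtain ⟨hv₀, hn₀, -, ⟨hcf₀, him₀⟩, hg₀⟩ := hA f₀ hf₀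
      have hgg : ∀ f ∈ A, ∀ e, e ≠ w → e ≠ e' → f e = g e := by
        intro f hf e h1 h2
        exact (hA f hf).2.2.2.2 e h1 (by rw [mem_singleton]; exact h2)
      have hY : #Y ≤ 2 := by
        have h1 : Y.image some ⊆ {f₀ w, f₀ e'} := by
          intro o ho
          obtain ⟨c, hc, rfl⟩ := mem_image.1 ho
          simp only [Y, R, SL, mem_sdiff, mem_union, mem_filter, mem_univ, true_and, not_or,
            not_exists, not_and] at hc
          obtain ⟨hc1, hc2, hc3⟩ := hc
          obtain ⟨e, h1, h2, h3⟩ := hc1.resolve_left hc2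
          simp only [mem_insert, mem_singleton]
          by_contra hcon
          push Not at hcon
          have hew : e ≠ w := by rintro rfl; exact hcon.1 h3.symm
          have hee : e ≠ e' := by rintro h; rw [h] at h3; exact hcon.2 h3.symm
          apply hc3 e h1 h2 hew hee
          rw [← hgg f₀ hf₀ e hew hee, h3]
        have h2 := card_le_card h1
        rw [card_image_of_injective _ (Option.some_injective C)] at h2
        exact h2.trans card_le_two
      have hmem : ∀ f ∈ A, ∀ e : L.edgeSet, (e = w ∨ e = e') → f e ∈ Y.image some := by
        intro f hf e he
        obtain ⟨hv, hn, -, ⟨hcf, him⟩, -⟩ := hA f hf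
        have hue : u ∈ e.1 ∧ v ∉ e.1 := by
          rcases he with rfl | rfl
          · exact ⟨hp1, hp2⟩
          · exact hpk.2
        have hfe : f e ≠ none := hcf.2.2.1 e (Or.inl hue)
        obtain ⟨c, hc⟩ := Option.ne_none_iff_exists'.1 hfe
        rw [hc]
        apply mem_image_of_mem
        rw [mem_sdiff]
        constructor
        · rw [hcf₀.2.2.2, SL_congr L B f₀ f v u, ← hcf.2.2.2]
          · simp only [SL, mem_union, mem_filter, mem_univ, true_and]
            exact Or.inr ⟨e, hue.1, hue.2, hc⟩
          · intro e1 h1 _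
            have hw1 : e1 ≠ w := by rintro rfl; exact hp2 h1
            have hw2 : e1 ≠ e' := by rintro h; rw [h] at h1; exact hpk.2.2 h1
            rw [hgg f hf e1 hw1 hw2, hgg f₀ hf₀ e1 hw1 hw2]
        · simp only [R, mem_filter, mem_univ, true_and]
          rintro (h | ⟨e1, h1, h2, h3, h4, h5⟩)
          · exact (mem_filter.1 (hv e c hc)).2 u hue.1 h
          · refine him ⟨e, e1, ?_, ⟨u, hue.1, h1⟩, hfe, ?_⟩
            · rintro rfl
              rcases he with h | h
              · exact h3 h
              · exact h4 h
            · rw [hc, hgg f hf e1 h3 h4, h5]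
      have hcard : #A ≤ #((Y.image some) ×ˢ (Y.image some)) := by
        apply card_le_card_of_injOn (fun f => (f w, f e'))
        · intro f hf
          rw [mem_coe, mem_product]
          exact ⟨hmem f hf w (Or.inl rfl), hmem f hf e' (Or.inr rfl)⟩
        · intro f hf f' hf' h
          simp only [Prod.mk.injEq] at h
          funext i
          by_cases hi : i = w
          · rw [hi, h.1]
          by_cases hi' : i = e'
          · rw [hi', h.2]
          · rw [hgg f hf i hi hi', hgg f' hf' i hi hi']
      rw [card_product, card_image_of_injective _ (Option.some_injective C)] at hcard
      exact hcard.trans (Nat.mul_le_mul hY hY)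
  · intro w f hval hw hb hnb
    by_cases hI : ImpL L f
    · left
      obtain ⟨e, e', h1, ⟨x, h2, h2'⟩, h3, h4⟩ := hI
      have : e = w ∨ e' = w := by
        by_contra hcon
        push Not at hcon
        refine hnb (Or.inl ⟨e, e', h1, ⟨x, h2, h2'⟩, ?_, ?_⟩)
        · rw [Function.update_of_ne hcon.1]; exact h3
        · rw [Function.update_of_ne hcon.1, Function.update_of_ne hcon.2]; exact h4
      rcases this with rfl | rfl
      · exact ⟨e', mem_filter.2 ⟨mem_univ _, h1.symm, x, h2', h2⟩, h4, by simp, by simp⟩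
      · exact ⟨e, mem_filter.2 ⟨mem_univ _, h1, x, h2, h2'⟩, h4.symm, by simp, by simp⟩
    · right
      obtain ⟨u, v, hc⟩ := hb.resolve_left hI
      have hrel : Rel L u v w := by
        by_contra hcon
        refine hnb (Or.inr ⟨u, v, CfL_congr L B f _ u v ?_ hc⟩)
        intro e he
        rw [Function.update_of_ne]
        rintro rfl
        exact hcon he
      obtain ⟨u, v, hc, hu, hv⟩ : ∃ u v, CfL L B f u v ∧ u ∈ w.1 ∧ v ∉ w.1 := by
        rcases hrel with h | h
        · exact ⟨u, v, hc, h⟩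
        · exact ⟨v, u, CfL_symm L B hc, h⟩
      obtain ⟨x, hx⟩ := Sym2.mem_iff_exists.1 hu
      have hxa : L.Adj u x := by
        have := w.2
        rw [hx] at this
        exact this
      have hxv : x ≠ v := by
        rintro rfl
        rw [hx] at hv
        simp at hv
      have hd : 2 ≤ L.degree u := by
        rw [← SimpleGraph.card_neighborFinset_eq_degree, ← card_pair hxv]
        apply card_le_card
        intro z hz
        simp only [mem_insert, mem_singleton] at hz
        rcases hz with rfl | rfl
        · simpa using hxa
        · simpa using hc.1
      by_cases hd2 : L.degree u = 2
      · left
        exact ⟨(u, v), mem_filter.2 ⟨mem_univ _, hu, hv, hc.1, hd2⟩, hc, by simp, by simp⟩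
      · right
        have hm : (u, v) ∈ E₃ w := mem_filter.2 ⟨mem_univ _, hu, hv, hc.1, by simp only; omega⟩
        have hp := hpick w (u, v) hm
        refine ⟨(u, v), hm, ⟨hc, hI⟩, ?_, ?_⟩
        · rw [mem_singleton]; exact hp.1.symm
        · intro i hi
          rw [mem_singleton] at hi
          rw [hi]
          exact hc.2.2.1 _ (Or.inl hp.2)
  · intro w
    have hE : ∃ a b, L.Adj a b ∧ #(E₁ w) ≤ L.degree a + L.degree b ∧ D + 19 ≤ #(O w) + (#(B a) + #(B b)) := by
      obtain ⟨⟨a, b⟩, hab⟩ := w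
      refine ⟨a, b, hab, ?_, ?_⟩
      · have h1 : (E₁ ⟨s(a, b), hab⟩).image Subtype.val ⊆ L.incidenceFinset a ∪ L.incidenceFinset b := by
          intro e he
          obtain ⟨e, he1, rfl⟩ := mem_image.1 he
          obtain ⟨-, -, x, hx, hx'⟩ := mem_filter.1 he1
          have hx' : x ∈ s(a, b) := hx'
          rw [Sym2.mem_iff] at hx'
          rw [mem_union, SimpleGraph.mem_incidenceFinset, SimpleGraph.mem_incidenceFinset]
          rcases hx' with rfl | rfl
          · exact Or.inl ⟨e.2, hx⟩
          · exact Or.inr ⟨e.2, hx⟩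
        have h2 := (card_le_card h1).trans (card_union_le _ _)
        rwa [card_image_of_injective _ Subtype.val_injective, SimpleGraph.card_incidenceFinset_eq_degree,
          SimpleGraph.card_incidenceFinset_eq_degree] at h2
      · have h1 : (univ : Finset C) ⊆ O ⟨s(a, b), hab⟩ ∪ (B a ∪ B b) := by
          intro c _
          simp only [O, mem_union, mem_filter, mem_univ, true_and]
          by_contra hcon
          push Not at hcon
          obtain ⟨⟨v, hv, hv'⟩, h2, h3⟩ := hcon
          have hv : v ∈ s(a, b) := hv
          rw [Sym2.mem_iff] at hv
          rcases hv with rfl | rfl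
          · exact h2 hv'
          · exact h3 hv'
        have h2 := card_le_card h1
        rw [card_univ, hC] at h2
        exact h2.trans ((card_union_le _ _).trans (Nat.add_le_add_left (card_union_le _ _) _))
    obtain ⟨a, b, hab, h1, h2⟩ := hE
    have h3 := hdeg a (by rw [SimpleGraph.degree_pos_iff_exists_adj]; exact ⟨b, hab⟩)
    have h4 := hdeg b (by rw [SimpleGraph.degree_pos_iff_exists_adj]; exact ⟨a, hab.symm⟩)
    have h5 : 20 * #(E₁ w) + 2 * D ≤ 20 * #(O w) := by omega
    have h5' : (20 * #(E₁ w) + 2 * D : ℝ) ≤ 20 * #(O w) := by exact_mod_cast h5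
    have h6 : (2 * D : ℝ) * (4 / (1 / 20 * D) ^ 1) = 160 := by
      field_simp
      norm_num
    have hD' : (10 ^ 12 : ℝ) ≤ D := by exact_mod_cast hD
    push_cast
    rw [h6]
    simp only [pow_zero]
    linarith

end low
end AVD

namespace AVD
open Finset

open Classical in
theorem viz_apply {V W : Type*} [Fintype V] [Fintype W] (Low : V → Prop) (π : V → W)
    (hf1 : ∀ u x, ¬ Low u → π u = π x → u = x) (hf2 : ∀ y, #(univ.filter fun x => π x = y) ≤ 2)
    (F : Finset (Sym2 V)) (K : ℕ) (hF : ∀ e ∈ F, ∃ w x, e = s(w, x) ∧ ¬ Low w ∧ w ≠ x)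
    (hhi : ∀ u, ¬ Low u → #(F.filter fun e => u ∈ e) + 1 ≤ K)
    (hlo : ∀ y, (∀ x, π x = y → Low x) → #(F.filter fun e => y ∈ Sym2.map π e) + 2 ≤ K) :
    ∃ c, PC (Sym2.map π) K F c := by
  have hhi' : ∀ u, ¬ Low u → #(F.filter fun e => π u ∈ Sym2.map π e) + 1 ≤ K := by
    intro u hu
    refine le_trans (Nat.add_le_add_right (card_le_card ?_) 1) (hhi u hu)
    intro e he
    rw [mem_filter] at he ⊢
    obtain ⟨x, hx, hxu⟩ := Sym2.mem_map.1 he.2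
    rw [hf1 u x hu hxu.symm]
    exact ⟨he.1, hx⟩
  apply vizing (Sym2.map π) K F
  · intro e he
    obtain ⟨w, x, rfl, hw, hwx⟩ := hF e he
    rw [Sym2.map_mk, Sym2.mk_isDiag_iff]
    exact fun h => hwx (hf1 w x hw h)
  · intro y
    by_cases h : ∃ u, ¬ Low u ∧ π u = y
    · obtain ⟨u, hu, rfl⟩ := h
      have := hhi' u hu
      omega
    · push Not at h
      have := hlo y (fun x hx => by by_contra hc; exact h x hc hx)
      omega
  · intro e he
    obtain ⟨w, x, rfl, hw, hwx⟩ := hF e he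
    refine ⟨π w, by simp, ?_⟩
    intro y hy
    have hmult : #(F.filter fun e => Sym2.map π e = s(π w, y)) ≤ #(univ.filter fun x => π x = y) := by
      refine le_trans (card_le_card ?_) (card_image_le (f := fun b => s(w, b)))
      intro e he
      rw [mem_filter] at he
      obtain ⟨-, he⟩ := he
      have h1 : π w ∈ Sym2.map π e := by rw [he]; simp
      obtain ⟨a, ha, haw⟩ := Sym2.mem_map.1 h1
      rw [← hf1 w a hw haw.symm] at ha
      obtain ⟨b, rfl⟩ := Sym2.mem_iff_exists.1 ha
      rw [Sym2.map_mk] at he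
      rw [mem_image]
      exact ⟨b, mem_filter.2 ⟨mem_univ _, Sym2.congr_right.1 he⟩, rfl⟩
    by_cases h : ∃ u, ¬ Low u ∧ π u = y
    · obtain ⟨u, hu, rfl⟩ := h
      have h1 := hhi' u hu
      have h2 : #(univ.filter fun x => π x = π u) ≤ 1 := by
        rw [card_le_one]
        intro a ha b hb
        rw [← hf1 u a hu (mem_filter.1 ha).2.symm, ← hf1 u b hu (mem_filter.1 hb).2.symm]
      omega
    · push Not at h
      have h1 := hlo y (fun x hx => by by_contra hc; exact h x hc hx)
      have h2 := hf2 y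
      omega

open Classical in
theorem stage1 {V W : Type*} [Fintype V] [Fintype W] (G : SimpleGraph V) (D : ℕ)
    (hdeg : ∀ v, G.degree v ≤ D) (hD : 10 ^ 12 ≤ D) (π : V → W)
    (hf1 : ∀ u x, ¬ 20 * G.degree u ≤ 9 * D → π u = π x → u = x)
    (hf2 : ∀ y, #(univ.filter fun x => π x = y) ≤ 2)
    (E0 : Finset (Sym2 V))
    (hE0 : ∀ e, e ∈ E0 ↔ e ∈ G.edgeSet ∧ ∃ v ∈ e, ¬ 20 * G.degree v ≤ 9 * D) :
    ∃ c1 : Sym2 V → ℕ, PC (Sym2.map π) (D + 19) E0 c1 ∧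
      ∀ u v, ¬ 20 * G.degree u ≤ 9 * D → ¬ 20 * G.degree v ≤ 9 * D → G.Adj u v →
        ¬ ∀ n, n < D + 1 → ((∃ x, G.Adj u x ∧ c1 s(u, x) = n) ↔ ∃ x, G.Adj v x ∧ c1 s(v, x) = n) := by
  set Low : V → Prop := fun v => 20 * G.degree v ≤ 9 * D with hLow
  have hEw : ∀ e ∈ E0, ∃ w x, e = s(w, x) ∧ ¬ Low w ∧ w ≠ x := by
    intro e he
    obtain ⟨h1, w, hw, hl⟩ := (hE0 e).1 he
    obtain ⟨x, rfl⟩ := Sym2.mem_iff_exists.1 hw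
    exact ⟨w, x, rfl, hl, G.ne_of_adj h1⟩
  have hincE : ∀ v, E0.filter (fun e => v ∈ e) ⊆ G.incidenceFinset v := by
    intro v e he
    rw [mem_filter] at he
    rw [SimpleGraph.mem_incidenceFinset]
    exact ⟨((hE0 e).1 he.1).1, he.2⟩
  have hdE : ∀ v, #(E0.filter (fun e => v ∈ e)) ≤ G.degree v := by
    intro v
    rw [← SimpleGraph.card_incidenceFinset_eq_degree]
    exact card_le_card (hincE v)
  have hlowdeg : ∀ y, (∀ x, π x = y → Low x) →
      10 * #(E0.filter fun e => y ∈ Sym2.map π e) ≤ 9 * D := by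
    intro y hy
    have h1 : E0.filter (fun e => y ∈ Sym2.map π e) ⊆
        (univ.filter fun x => π x = y).biUnion fun x => E0.filter (fun e => x ∈ e) := by
      intro e he
      rw [mem_filter] at he
      obtain ⟨x, hx, hxy⟩ := Sym2.mem_map.1 he.2
      rw [mem_biUnion]
      exact ⟨x, mem_filter.2 ⟨mem_univ _, hxy⟩, mem_filter.2 ⟨he.1, hx⟩⟩
    have h2 := (card_le_card h1).trans (card_biUnion_le_card_mul _ _ (9 * D / 20) (by
      intro x hx
      have h3 := hdE x
      have h4 : 20 * G.degree x ≤ 9 * D := hy x (mem_filter.1 hx).2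
      omega))
    have h3 := hf2 y
    have h4 : #(univ.filter fun x => π x = y) * (9 * D / 20) ≤ 2 * (9 * D / 20) :=
      Nat.mul_le_mul_right _ h3
    omega
  have hhideg : ∀ u, ¬ Low u → #(E0.filter fun e => π u ∈ Sym2.map π e) ≤ D := by
    intro u hu
    refine le_trans (card_le_card ?_) ((hdE u).trans (hdeg u))
    intro e he
    rw [mem_filter] at he ⊢
    obtain ⟨x, hx, hxu⟩ := Sym2.mem_map.1 he.2
    rw [hf1 u x hu hxu.symm]
    exact ⟨he.1, hx⟩
  have hclassdeg : ∀ y, #(E0.filter fun e => y ∈ Sym2.map π e) ≤ D := by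
    intro y
    by_cases h : ∃ u, ¬ Low u ∧ π u = y
    · obtain ⟨u, hu, rfl⟩ := h
      exact hhideg u hu
    · push Not at h
      have := hlowdeg y (fun x hx => by by_contra hc; exact h x hc hx)
      omega
  obtain ⟨c0, hc0⟩ := viz_apply Low π hf1 hf2 E0 (D + 1) hEw
    (fun u _ => by have := hdE u; have := hdeg u; omega)
    (fun y hy => by have := hlowdeg y hy; omega)
  let U := {v : V // ¬ Low v}
  let ν : U → V := Subtype.val
  let A : U → Finset (Sym2 V) := fun u => G.incidenceFinset u.1
  have hAE : ∀ u, A u ⊆ E0 := by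
    intro u e he
    have he := (SimpleGraph.mem_incidenceFinset _ _ _).1 he
    exact (hE0 e).2 ⟨he.1, u.1, he.2, u.2⟩
  have hAm : ∀ u : U, ∀ e ∈ A u, u.1 ∈ e := by
    intro u e he
    exact ((SimpleGraph.mem_incidenceFinset _ _ _).1 he).2
  have hA2 : ∀ u : U, ∀ e ∈ E0, u.1 ∈ e → e ∈ A u := by
    intro u e he hu
    exact (SimpleGraph.mem_incidenceFinset _ _ _).2 ⟨((hE0 e).1 he).1, hu⟩
  let m := 9 * D / 20 + 1
  have hm : m = 9 * D / 20 + 1 := rfl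
  have hO : ∀ u : U, ∃ O ⊆ A u, #O = m := by
    intro u
    apply exists_subset_card_eq
    simp only [A]
    rw [SimpleGraph.card_incidenceFinset_eq_degree]
    have : ¬ 20 * G.degree u.1 ≤ 9 * D := u.2
    omega
  choose O hOA hOc using hO
  have hπ : Function.Injective (fun u => π (ν u)) := fun a b h => Subtype.ext (hf1 a.1 b.1 a.2 h)
  obtain ⟨f, hfO, hbad⟩ := high_stage ν π A c0 (fun u v => G.Adj u.1 v.1) hπ hAm
    (fun u x e he hu => hA2 u e (hAE x he) hu)
    (by
      intro u e he e' he' h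
      by_contra hne
      exact hc0.2 e (hAE u he) e' (hAE u he') hne (π u.1) (Sym2.mem_map.2 ⟨_, hAm u e he, rfl⟩)
        (Sym2.mem_map.2 ⟨_, hAm u e' he', rfl⟩) h)
    (fun u v h huv => G.ne_of_adj h (by rw [huv])) O hOA m D hOc (by omega) (by omega) hD
    (by
      intro y
      refine le_trans (card_le_card_of_injOn Prod.snd ?_ ?_) (hclassdeg y)
      · intro p hp
        have hp := (mem_filter.1 hp).2
        exact mem_filter.2 ⟨hAE _ (hOA _ hp.1), hp.2.2⟩
      · rintro ⟨a, e⟩ hp ⟨a', e'⟩ hp' (rfl : e = e')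
        obtain ⟨-, h1, h2, h3⟩ := mem_filter.1 hp
        obtain ⟨-, h1', h2', h3'⟩ := mem_filter.1 hp'
        simp only at *
        have ha := hAm _ _ (hOA _ h1)
        have ha' := hAm _ _ (hOA _ h1')
        obtain ⟨b, rfl⟩ := Sym2.mem_iff_exists.1 ha
        rw [Sym2.map_mk, Sym2.mem_iff] at h3
        have hyb := h3.resolve_left (fun h => h2 h.symm)
        rw [Sym2.mem_iff] at ha'
        rcases ha' with h | h
        · rw [Subtype.ext h]
        · exact absurd (by rw [hyb, ← h]) h2')
    (by
      intro u
      refine le_trans (card_le_card_of_injOn (t := G.neighborFinset u.1) Subtype.val ?_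
        Subtype.val_injective.injOn) (hdeg u.1)
      intro v hv
      have := (mem_filter.1 hv).2
      rw [mem_coe, SimpleGraph.mem_neighborFinset]
      exact this)
    (by
      rintro ⟨a, b⟩
      let T : Finset (V × V) := ({a, b} : Finset V).biUnion fun x =>
        (G.neighborFinset x).image (fun z => (x, z)) ∪ (G.neighborFinset x).image (fun z => (z, x))
      have hT : #T ≤ 4 * D := by
        have h1 : #T ≤ #({a, b} : Finset V) * (D + D) := by
          apply card_biUnion_le_card_mul
          intro x _
          refine (card_union_le _ _).trans (Nat.add_le_add ?_ ?_)
          · exact card_image_le.trans (hdeg x)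
          · exact card_image_le.trans (hdeg x)
        have h2 : #({a, b} : Finset V) * (D + D) ≤ 2 * (D + D) := Nat.mul_le_mul_right _ card_le_two
        omega
      refine le_trans (card_le_card_of_injOn (t := T) (fun p => (p.1.1, p.2.1)) ?_ ?_) hT
      · rintro ⟨u, v⟩ hp
        obtain ⟨h1, h2⟩ := (mem_filter.1 hp).2
        have h2 : u.1 ∈ s(a, b) ∨ v.1 ∈ s(a, b) := h2
        have h1 : G.Adj u.1 v.1 := h1
        simp only [T, mem_coe, mem_biUnion, mem_union, mem_image, SimpleGraph.mem_neighborFinset]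
        rcases h2 with h2 | h2
        · exact ⟨u.1, by simpa using h2, Or.inl ⟨v.1, h1, rfl⟩⟩
        · exact ⟨v.1, by simpa using h2, Or.inr ⟨u.1, h1.symm, rfl⟩⟩
      · rintro ⟨u, v⟩ _ ⟨u', v'⟩ _ h
        simp only [Prod.mk.injEq] at h
        rw [Subtype.ext h.1, Subtype.ext h.2])
  have hcap : ∀ y, #(Inn ν π (fun j => some (f j)) y) ≤ 15 := by
    intro y
    by_contra hcon
    push Not at hcon
    exact hbad (Or.inl ⟨y, hcon⟩)
  let H : Finset (Sym2 V) := univ.image f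
  have hHE : H ⊆ E0 := by
    intro e he
    obtain ⟨j, -, rfl⟩ := mem_image.1 he
    exact hAE _ (hOA _ (hfO j))
  have hHf : ∀ x e, e ∈ Hf (fun j => some (f j)) x ↔ e ∈ H ∧ x ∈ e := by
    intro x e
    simp only [Hf, H, mem_filter, mem_univ, true_and, mem_image, Option.some.injEq]
    exact and_comm
  obtain ⟨cH, hcH⟩ := viz_apply Low π hf1 hf2 H 18 (fun e he => hEw e (hHE he))
    (by
      intro u hu
      have h1 := card_Hf ν π hπ (fun j => some (f j)) ⟨u, hu⟩ (hcap _)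
      have h2 : H.filter (fun e => u ∈ e) = Hf (fun j => some (f j)) u := by
        ext e
        rw [hHf, mem_filter]
      rw [h2]
      have h1 : #(Hf (fun j => some (f j)) u) ≤ 17 := h1
      omega)
    (by
      intro y hy
      have h1 := hcap y
      have h2 : H.filter (fun e => y ∈ Sym2.map π e) ⊆ (Inn ν π (fun j => some (f j)) y).image f := by
        intro e he
        rw [mem_filter] at he
        obtain ⟨h3, h4⟩ := he
        obtain ⟨j, -, rfl⟩ := mem_image.1 h3
        apply mem_image_of_mem
        simp only [Inn, mem_filter, mem_univ, true_and]
        exact ⟨fun h => j.1.2 (hy _ h), _, rfl, h4⟩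
      have h3 := (card_le_card h2).trans card_image_le
      omega)
  refine ⟨fun e => if e ∈ H then D + 1 + cH e else c0 e, ⟨?_, ?_⟩, ?_⟩
  · intro e he
    simp only
    split_ifs with h
    · have := hcH.1 e h; omega
    · have := hc0.1 e he; omega
  · intro e he e' he' hne x hx hx'
    simp only
    have hlt := hc0.1 e he
    have hlt' := hc0.1 e' he'
    split_ifs with h h' h'
    · have := hcH.2 e h e' h' hne x hx hx'; omega
    · omega
    · omega
    · exact hc0.2 e he e' he' hne x hx hx'
  · intro u v hu hv huv hall
    have key : ∀ (u : U) n, n ∈ (A u \ Hf (fun j => some (f j)) u.1).image c0 ↔ n < D + 1 ∧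
        ∃ x, G.Adj u.1 x ∧ (if s(u.1, x) ∈ H then D + 1 + cH s(u.1, x) else c0 s(u.1, x)) = n := by
      intro u n
      rw [mem_image]
      constructor
      · rintro ⟨e, he, rfl⟩
        rw [mem_sdiff, hHf, not_and] at he
        have hue := hAm u e he.1
        refine ⟨hc0.1 e (hAE u he.1), ?_⟩
        have heA := (SimpleGraph.mem_incidenceFinset _ _ _).1 he.1
        obtain ⟨x, rfl⟩ := Sym2.mem_iff_exists.1 hue
        refine ⟨x, heA.1, ?_⟩
        rw [if_neg (fun h => he.2 h hue)]
      · rintro ⟨hn, x, hx, rfl⟩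
        split_ifs at hn with h
        · omega
        · refine ⟨s(u.1, x), ?_, by rw [if_neg h]⟩
          rw [mem_sdiff, hHf]
          exact ⟨(SimpleGraph.mem_incidenceFinset _ _ _).2 ⟨hx, by simp⟩, fun h' => h h'.1⟩
    refine hbad (Or.inr ⟨⟨u, hu⟩, ⟨v, hv⟩, huv, f (⟨u, hu⟩, false), f (⟨u, hu⟩, true), _, _, rfl, rfl,
      Subset.refl _, Subset.refl _, ?_, ?_, ?_⟩)
    · exact (hHf _ _).2 ⟨mem_image_of_mem _ (mem_univ _), hAm _ _ (hOA _ (hfO _))⟩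
    · exact (hHf _ _).2 ⟨mem_image_of_mem _ (mem_univ _), hAm _ _ (hOA _ (hfO _))⟩
    · ext n
      have k1 := key ⟨u, hu⟩ n
      have k2 := key ⟨v, hv⟩ n
      have k3 := hall n
      simp only at k1 k2 k3
      have : n ∈ (A ⟨u, hu⟩ \ Hf (fun j => some (f j)) u).image c0 ↔
          n ∈ (A ⟨v, hv⟩ \ Hf (fun j => some (f j)) v).image c0 := by
        rw [k1, k2]
        constructor
        · rintro ⟨h1, h2⟩; exact ⟨h1, (k3 h1).1 h2⟩
        · rintro ⟨h1, h2⟩; exact ⟨h1, (k3 h1).2 h2⟩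
      convert this

end AVD

namespace AVD
open Finset

open Classical in
theorem main {V : Type*} [Fintype V] (G : SimpleGraph V) (D : ℕ)
    (hdeg : ∀ v, G.degree v ≤ D) (hD : 10 ^ 12 ≤ D)
    (hiso : ∀ u v : V, G.Adj u v → ¬(G.degree u = 1 ∧ G.degree v = 1)) :
    ∃ c : Sym2 V → ℕ, ProperEdgeColoring G c ∧ (∀ e ∈ G.edgeSet, c e < D + 19) ∧
      (∀ u v : V, G.Adj u v → colorSet G c u ≠ colorSet G c v) := by
  set Low : V → Prop := fun v => 20 * G.degree v ≤ 9 * D with hLow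
  obtain ⟨L, hL⟩ : ∃ L : SimpleGraph V, ∀ u v, L.Adj u v ↔ G.Adj u v ∧ Low u ∧ Low v :=
    ⟨{ Adj := fun u v => G.Adj u v ∧ Low u ∧ Low v
       symm := ⟨fun u v h => ⟨h.1.symm, h.2.2, h.2.1⟩⟩
       loopless := ⟨fun u h => G.loopless.irrefl u h.1⟩ }, fun _ _ => Iff.rfl⟩
  let Pair : V → V → Prop := fun u v => L.Adj u v ∧ (∀ z, L.Adj u z → z = v) ∧ ∀ z, L.Adj v z → z = u
  have hPs : ∀ u v, Pair u v → Pair v u := fun u v h => ⟨h.1.symm, h.2.2, h.2.1⟩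
  let π : V → Set V := fun u => {x | x = u ∨ Pair u x}
  have hπ1 : ∀ u v, π u = π v → v = u ∨ Pair u v := by
    intro u v h
    have : v ∈ π v := Or.inl rfl
    rw [← h] at this
    exact this
  have hπ2 : ∀ u v, Pair u v → π u = π v := by
    intro u v h
    have h1 : ∀ u v, Pair u v → π u ⊆ π v := by
      intro u v h x hx
      rcases hx with rfl | hx
      · exact Or.inr (hPs _ _ h)
      · left; exact h.2.1 x hx.1
    exact Set.Subset.antisymm (h1 u v h) (h1 v u (hPs _ _ h))
  have hf1 : ∀ u x, ¬ 20 * G.degree u ≤ 9 * D → π u = π x → u = x := by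
    intro u x hu h
    rcases hπ1 u x h with h | h
    · exact h.symm
    · exact absurd ((hL _ _).1 h.1).2.1 hu
  have hf2 : ∀ y, #(univ.filter fun x => π x = y) ≤ 2 := by
    intro y
    by_contra hcon
    push Not at hcon
    obtain ⟨a, b, c, ha, hb, hc, hab, hac, hbc⟩ := two_lt_card_iff.1 hcon
    have ha := (mem_filter.1 ha).2
    have hb := (mem_filter.1 hb).2
    have hc := (mem_filter.1 hc).2
    have h1 := (hπ1 a b (ha.trans hb.symm)).resolve_left hab.symm
    have h2 := (hπ1 a c (ha.trans hc.symm)).resolve_left hac.symm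
    exact hbc (h2.2.1 b h1.1)
  let E0 : Finset (Sym2 V) := univ.filter fun e => e ∈ G.edgeSet ∧ ∃ v ∈ e, ¬ 20 * G.degree v ≤ 9 * D
  have hE0 : ∀ e, e ∈ E0 ↔ e ∈ G.edgeSet ∧ ∃ v ∈ e, ¬ 20 * G.degree v ≤ 9 * D := by
    intro e; simp [E0]
  obtain ⟨c1, ⟨hlt, hpr⟩, hhigh⟩ := stage1 G D hdeg hD π hf1 hf2 E0 hE0
  have hLG : ∀ e, e ∈ L.edgeSet → e ∈ G.edgeSet := by
    rintro ⟨a, b⟩ h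
    exact ((hL a b).1 h).1
  have hLE : ∀ e, e ∈ G.edgeSet → (e ∈ E0 ↔ e ∉ L.edgeSet) := by
    rintro ⟨a, b⟩ h
    have h : G.Adj a b := h
    rw [hE0]
    change _ ↔ ¬ L.Adj a b
    rw [hL]
    constructor
    · rintro ⟨-, v, hv, hn⟩ h'
      have hv : v ∈ s(a, b) := hv
      rw [Sym2.mem_iff] at hv
      rcases hv with rfl | rfl
      · exact hn h'.2.1
      · exact hn h'.2.2
    · intro h'
      refine ⟨h, ?_⟩
      by_contra hcon
      push Not at hcon
      exact h' ⟨h, hcon a (Sym2.mem_mk_left a b), hcon b (Sym2.mem_mk_right a b)⟩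
  let B : V → Finset (Fin (D + 19)) := fun v => univ.filter fun n => ∃ e ∈ E0, v ∈ e ∧ c1 e = n.1
  have hB : ∀ v n, n ∈ B v ↔ ∃ e ∈ E0, v ∈ e ∧ c1 e = n.1 := by
    intro v n; simp [B]
  have hBdeg : ∀ v, 0 < L.degree v → 20 * (#(B v) + L.degree v) ≤ 9 * D := by
    intro v hv
    obtain ⟨w, hw⟩ := (L.degree_pos_iff_exists_adj v).1 hv
    have hlv : 20 * G.degree v ≤ 9 * D := ((hL _ _).1 hw).2.1
    have h1 : #(B v) ≤ #(E0.filter fun e => v ∈ e) := by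
      have h2 : (B v).image Fin.val ⊆ (E0.filter fun e => v ∈ e).image c1 := by
        intro n hn
        obtain ⟨n, hn1, rfl⟩ := mem_image.1 hn
        obtain ⟨e, he, hv, hc⟩ := (hB v n).1 hn1
        exact mem_image.2 ⟨e, mem_filter.2 ⟨he, hv⟩, hc⟩
      have h3 := (card_le_card h2).trans card_image_le
      rwa [card_image_of_injective _ Fin.val_injective] at h3
    have h2 : Disjoint (E0.filter fun e => v ∈ e) (L.incidenceFinset v) := by
      rw [disjoint_left]
      intro e he he'
      rw [SimpleGraph.mem_incidenceFinset] at he'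
      have he := (mem_filter.1 he).1
      exact (hLE e (hLG e he'.1)).1 he he'.1
    have h3 : (E0.filter fun e => v ∈ e) ∪ (L.incidenceFinset v) ⊆ G.incidenceFinset v := by
      intro e he
      rw [SimpleGraph.mem_incidenceFinset]
      rcases mem_union.1 he with he | he
      · have := mem_filter.1 he
        exact ⟨((hE0 e).1 this.1).1, this.2⟩
      · rw [SimpleGraph.mem_incidenceFinset] at he
        exact ⟨hLG e he.1, he.2⟩
    have h4 := card_le_card h3
    rw [card_union_of_disjoint h2, SimpleGraph.card_incidenceFinset_eq_degree,
      SimpleGraph.card_incidenceFinset_eq_degree] at h4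
    omega
  obtain ⟨fL, hfB, hbad⟩ := low_stage L B D hD (Fintype.card_fin _) hBdeg
  obtain ⟨c, hcL, hcE⟩ : ∃ c : Sym2 V → ℕ, (∀ e : L.edgeSet, c e.1 = (fL e).1) ∧
      ∀ e ∈ E0, c e = c1 e := by
    refine ⟨fun e => if h : e ∈ L.edgeSet then (fL ⟨e, h⟩).1 else c1 e, ?_, ?_⟩
    · intro e; simp
    · intro e he
      have := (hLE e ((hE0 e).1 he).1).1 he
      simp [this]
  have hcross : ∀ e : L.edgeSet, ∀ e' ∈ E0, ∀ v, v ∈ e.1 → v ∈ e' → c e.1 ≠ c e' := by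
    intro e e' he' v hv hv' h
    rw [hcL, hcE e' he'] at h
    exact hfB e v hv ((hB _ _).2 ⟨e', he', hv', h.symm⟩)
  have hproper : ProperEdgeColoring G c := by
    rintro e he e' he' hne ⟨v, hv, hv'⟩
    by_cases h : e ∈ L.edgeSet
    · by_cases h' : e' ∈ L.edgeSet
      · intro hc
        refine hbad (Or.inl ⟨⟨e, h⟩, ⟨e', h'⟩, fun h => hne (congrArg Subtype.val h), ⟨v, hv, hv'⟩, by simp, ?_⟩)
        rw [hcL ⟨e, h⟩, hcL ⟨e', h'⟩] at hc
        exact congrArg some (Fin.ext hc)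
      · exact hcross ⟨e, h⟩ e' ((hLE e' he').2 h') v hv hv'
    · by_cases h' : e' ∈ L.edgeSet
      · exact (hcross ⟨e', h'⟩ e ((hLE e he).2 h) v hv' hv).symm
      · have h1 := (hLE e he).2 h
        have h2 := (hLE e' he').2 h'
        rw [hcE e h1, hcE e' h2]
        exact hpr e h1 e' h2 hne (π v) (Sym2.mem_map.2 ⟨_, hv, rfl⟩) (Sym2.mem_map.2 ⟨_, hv', rfl⟩)
  have hncard : ∀ u, (colorSet G c u).ncard = G.degree u := by
    intro u
    have h1 : colorSet G c u = (fun x => c s(u, x)) '' (G.neighborFinset u : Set V) := by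
      ext n
      simp [colorSet]
    rw [h1, Set.ncard_image_of_injOn, Set.ncard_coe_finset, SimpleGraph.card_neighborFinset_eq_degree]
    intro x hx y hy h
    by_contra hne
    rw [mem_coe, SimpleGraph.mem_neighborFinset] at hx hy
    exact hproper s(u, x) hx s(u, y) hy (fun h => hne (Sym2.congr_right.1 h)) ⟨u, by simp, by simp⟩ h
  have hinj : ∀ u x y, G.Adj u x → G.Adj u y → c s(u, x) = c s(u, y) → x = y := by
    intro u x y hx hy h
    by_contra hne
    exact hproper s(u, x) hx s(u, y) hy (fun h => hne (Sym2.congr_right.1 h)) ⟨u, by simp, by simp⟩ h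
  have hpair : ∀ u v z, Pair u v → G.Adj u z → z ≠ v → colorSet G c u ≠ colorSet G c v := by
    intro u v z hp hz hzv heq
    have huv := ((hL _ _).1 hp.1).1
    have h1 : c s(u, z) ∈ colorSet G c u := ⟨z, hz, rfl⟩
    rw [heq] at h1
    obtain ⟨z', hz', h2⟩ := h1
    have hz'u : z' ≠ u := by
      rintro rfl
      rw [Sym2.eq_swap] at h2
      exact hzv (hinj _ _ _ huv hz h2).symm
    have he : s(u, z) ∈ E0 := (hLE _ hz).2 fun h => hzv (hp.2.1 z h)
    have he' : s(v, z') ∈ E0 := (hLE _ hz').2 fun h => hz'u (hp.2.2 z' h)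
    rw [hcE _ he, hcE _ he'] at h2
    refine hpr _ he' _ he ?_ (π u) ?_ ?_ h2
    · intro h
      rw [Sym2.eq_iff] at h
      rcases h with h | h
      · exact G.ne_of_adj huv h.1.symm
      · exact hzv h.1.symm
    · rw [hπ2 u v hp]; simp
    · simp
  refine ⟨c, hproper, ?_, ?_⟩
  · intro e he
    by_cases h : e ∈ L.edgeSet
    · rw [hcL ⟨e, h⟩]; exact (fL ⟨e, h⟩).2
    · have h1 := (hLE e he).2 h
      rw [hcE e h1]; exact hlt e h1
  · intro u v huv heq
    have hd : G.degree u = G.degree v := by rw [← hncard, ← hncard, heq]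
    by_cases hu : Low u
    · have hv : Low v := by simp only [Low, ← hd]; exact hu
      have hLa : L.Adj u v := (hL _ _).2 ⟨huv, hu, hv⟩
      by_cases hp : Pair u v
      · have hex : ∀ a b, G.Adj a b → G.degree a ≠ 1 → ∃ z, G.Adj a z ∧ z ≠ b := by
          intro a b hab ha
          by_contra hcon
          push Not at hcon
          apply ha
          rw [← SimpleGraph.card_neighborFinset_eq_degree, card_eq_one]
          refine ⟨b, ?_⟩
          ext z
          rw [SimpleGraph.mem_neighborFinset, mem_singleton]
          exact ⟨hcon z, fun h => h ▸ hab⟩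
        have h1 : G.degree u ≠ 1 := fun h => hiso u v huv ⟨h, hd ▸ h⟩
        obtain ⟨z, hz, hzv⟩ := hex u v huv h1
        exact hpair u v z hp hz hzv heq
      · have hrel : ∃ e, Rel L u v e := by
          have h1 : (∃ z, L.Adj u z ∧ z ≠ v) ∨ ∃ z, L.Adj v z ∧ z ≠ u := by
            by_contra hcon
            push Not at hcon
            exact hp ⟨hLa, hcon.1, hcon.2⟩
          rcases h1 with ⟨z, hz, hzv⟩ | ⟨z, hz, hzv⟩
          · refine ⟨⟨s(u, z), hz⟩, Or.inl ⟨by simp, ?_⟩⟩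
            simp only [Sym2.mem_iff, not_or]
            exact ⟨G.ne_of_adj huv.symm, hzv.symm⟩
          · refine ⟨⟨s(v, z), hz⟩, Or.inr ⟨by simp, ?_⟩⟩
            simp only [Sym2.mem_iff, not_or]
            exact ⟨G.ne_of_adj huv, hzv.symm⟩
        have key : ∀ u v (n : Fin (D + 19)), L.Adj u v → (n ∈ SL L B (fun e => some (fL e)) u v ↔
            n.1 ∈ colorSet G c u ∧ n.1 ≠ c s(u, v)) := by
          intro u v n hLuv
          have huv := ((hL _ _).1 hLuv).1
          simp only [SL, mem_union, hB, mem_filter, mem_univ, true_and, Option.some.injEq]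
          constructor
          · rintro (⟨e, he, hue, hce⟩ | ⟨e, hue, hve, hfe⟩)
            · have hcr := hcross ⟨s(u, v), hLuv⟩ e he u (by simp) hue
              have heG := ((hE0 e).1 he).1
              have hc2 := hcE e he
              obtain ⟨x, rfl⟩ := Sym2.mem_iff_exists.1 hue
              refine ⟨⟨x, heG, hc2.trans hce⟩, ?_⟩
              rw [← hce, ← hc2]
              exact hcr.symm
            · have hc2 := hcL e
              obtain ⟨e, heL⟩ := e
              obtain ⟨x, rfl⟩ := Sym2.mem_iff_exists.1 hue
              have heG : G.Adj u x := hLG _ heL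
              have hc3 : c s(u, x) = n.1 := by rw [← hfe]; exact hc2
              refine ⟨⟨x, heG, hc3⟩, ?_⟩
              intro h
              have := hinj u x v heG huv (hc3.trans h)
              subst this
              exact hve (by simp)
          · rintro ⟨⟨z, hz, hcz⟩, hne⟩
            by_cases hzL : s(u, z) ∈ L.edgeSet
            · right
              refine ⟨⟨s(u, z), hzL⟩, by simp, ?_, ?_⟩
              · simp only [Sym2.mem_iff, not_or]
                refine ⟨G.ne_of_adj huv.symm, ?_⟩
                rintro rfl
                exact hne hcz.symm
              · exact Fin.ext ((hcL ⟨s(u, z), hzL⟩).symm.trans hcz)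
            · left
              have h1 := (hLE s(u, z) hz).2 hzL
              exact ⟨_, h1, by simp, (hcE _ h1).symm.trans hcz⟩
        refine hbad (Or.inr ⟨u, v, hLa, hrel, by simp, ?_⟩)
        ext n
        rw [key u v n hLa, key v u n hLa.symm, heq, Sym2.eq_swap]
    · have hv : ¬ Low v := by simp only [Low, ← hd]; exact hu
      refine hhigh u v hu hv huv ?_
      intro n hn
      have h1 : ∀ u, ¬ Low u → ((∃ x, G.Adj u x ∧ c1 s(u, x) = n) ↔ n ∈ colorSet G c u) := by
        intro u hu
        have h2 : ∀ x, G.Adj u x → c s(u, x) = c1 s(u, x) := fun x hx =>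
          hcE _ ((hE0 _).2 ⟨hx, u, by simp, hu⟩)
        constructor
        · rintro ⟨x, hx, h⟩; exact ⟨x, hx, by rw [h2 x hx, h]⟩
        · rintro ⟨x, hx, h⟩; exact ⟨x, hx, by rw [← h2 x hx, h]⟩
      rw [h1 u hu, h1 v hv, heq]

end AVD

theorem avd_colouring_delta_plus_19 :
    ∃ Δ₀ : ℕ,
      ∀ (V : Type) [Fintype V] [DecidableEq V] (G : SimpleGraph V) [DecidableRel G.Adj],
        Δ₀ ≤ G.maxDegree →
        (∀ u v : V, G.Adj u v → ¬(G.degree u = 1 ∧ G.degree v = 1)) →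
        ∃ c : Sym2 V → ℕ,
          ProperEdgeColoring G c ∧
          (∀ e ∈ G.edgeSet, c e < G.maxDegree + 19) ∧
          (∀ u v : V, G.Adj u v → colorSet G c u ≠ colorSet G c v) := by
  refine ⟨10 ^ 12, ?_⟩
  intro V _ _ G _ hD hiso
  apply AVD.main G G.maxDegree _ hD
  · intro u v huv
    convert hiso u v huv
  · intro v
    convert G.degree_le_maxDegree v
end

section
/- Let G be a finite simple graph with maximum degree Δ and no isolated edge, and let d be a positive integer with 2(d−1) < Δ. Then G has a proper edge colouring c using at most Δ + 2 colours such that, for every edge uv of G with the property that the set of vertices w ∈ N(u) ∪ N(v) of degree strictly less than d is exactly {u, v}, one has S_c(u) ∩ S_c(v) = {c(uv)}. -/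
set_option linter.unusedSectionVars false
set_option linter.unusedSimpArgs false

namespace VZ
open Classical Finset

variable {E W K : Type} [Fintype E] [Fintype W] [Fintype K]

def Prp (en : E → Sym2 W) (c : E → Option K) : Prop :=
  ∀ e f w, w ∈ en e → w ∈ en f → e ≠ f → ∀ a, c e = some a → c f ≠ some a

def Ms (en : E → Sym2 W) (c : E → Option K) (w : W) (a : K) : Prop :=
  ∀ e, w ∈ en e → c e ≠ some a

noncomputable def unc (c : E → Option K) : ℕ := (univ.filter (fun e => c e = none)).card

def Good (en : E → Sym2 W) (c : E → Option K) : Prop :=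
  Prp en c ∧ ∀ c' : E → Option K, Prp en c' → unc c ≤ unc c'

lemma good_free {en : E → Sym2 W} {c : E → Option K} (h : Good en c) {e : E} (he : c e = none)
    {v y : W} (hvy : en e = s(v, y)) (a : K) (h1 : Ms en c v a) (h2 : Ms en c y a) : False := by
  have hp : Prp en (Function.update c e (some a)) := by
    intro f g w hf hg hne b hb hb'
    by_cases hfe : f = e
    · subst hfe
      have hge : g ≠ f := fun h => hne h.symm
      simp [Function.update_of_ne hge] at hb hb'
      subst hb
      rw [hvy, Sym2.mem_iff] at hf
      rcases hf with rfl | rfl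
      · exact h1 g hg hb'
      · exact h2 g hg hb'
    · by_cases hge : g = e
      · subst hge
        simp [Function.update_of_ne hfe] at hb hb'
        subst hb'
        rw [hvy, Sym2.mem_iff] at hg
        rcases hg with rfl | rfl
        · exact h1 f hf hb
        · exact h2 f hf hb
      · rw [Function.update_of_ne hfe] at hb
        rw [Function.update_of_ne hge] at hb'
        exact h.1 f g w hf hg hne b hb hb'
  have hlt : unc (Function.update c e (some a)) < unc c := by
    apply Finset.card_lt_card
    rw [Finset.ssubset_iff_of_subset]
    · exact ⟨e, by simp [he], by simp⟩
    · intro f hf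
      simp only [mem_filter, mem_univ, true_and] at hf ⊢
      by_cases hfe : f = e
      · rw [hfe]; exact he
      · rwa [Function.update_of_ne hfe] at hf
  exact absurd (h.2 _ hp) (by omega)

/-- the shift colouring -/
noncomputable def shift (c : E → Option K) (e f : E) : E → Option K :=
  fun g => if g = f then none else if g = e then c f else c g

lemma good_shift {en : E → Sym2 W} {c : E → Option K} (h : Good en c) {e f : E} (he : c e = none)
    {v y : W} (hvy : en e = s(v, y)) (a : K) (hf : c f = some a) (hvf : v ∈ en f)
    (h2 : Ms en c y a) : Good en (shift c e f) := by
  have hef : e ≠ f := by rintro rfl; simp [he] at hf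
  have hp : Prp en (shift c e f) := by
    intro g g' w hg hg' hne b hb hb'
    unfold shift at hb hb'
    by_cases h1 : g = f
    · simp [h1] at hb
    by_cases h1' : g' = f
    · simp [h1'] at hb'
    rw [if_neg h1] at hb
    rw [if_neg h1'] at hb'
    by_cases h3 : g = e
    · have h3' : g' ≠ e := fun h => hne (h3.trans h.symm)
      rw [if_pos h3] at hb
      rw [if_neg h3'] at hb'
      rw [h3, hvy, Sym2.mem_iff] at hg
      rcases hg with rfl | rfl
      · exact h.1 f g' w hvf hg' (Ne.symm h1') b hb hb'
      · rw [hf] at hb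
        exact h2 g' hg' (by rw [hb', hb])
    · rw [if_neg h3] at hb
      by_cases h3' : g' = e
      · rw [if_pos h3'] at hb'
        rw [h3', hvy, Sym2.mem_iff] at hg'
        rcases hg' with rfl | rfl
        · exact h.1 f g w hvf hg (Ne.symm h1) b hb' hb
        · rw [hf] at hb'
          exact h2 g hg (by rw [hb', hb])
      · rw [if_neg h3'] at hb'
        exact h.1 g g' w hg hg' hne b hb hb'
  have hu : unc (shift c e f) = unc c := by
    unfold unc
    apply Finset.card_bij (fun g _ => Equiv.swap e f g)
    · intro g hg
      simp only [mem_filter, mem_univ, true_and, shift] at hg ⊢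
      by_cases h1 : g = f
      · subst h1; simp [he]
      · by_cases h3 : g = e
        · subst h3; simp [h1, hf] at hg
        · rw [Equiv.swap_apply_of_ne_of_ne h3 h1]; simpa [h1, h3] using hg
    · intro a _ b _ hab
      exact (Equiv.swap e f).injective hab
    · intro g hg
      simp only [mem_filter, mem_univ, true_and] at hg
      refine ⟨Equiv.swap e f g, ?_, by simp⟩
      simp only [mem_filter, mem_univ, true_and, shift]
      by_cases h3 : g = e
      · subst h3; simp
      · have h1 : g ≠ f := by rintro rfl; simp [hf] at hg
        rw [Equiv.swap_apply_of_ne_of_ne h3 h1]; simpa [h1, h3] using hg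
  exact ⟨hp, fun c' hc' => by rw [hu]; exact h.2 c' hc'⟩

/-- Kempe swap on a vertex set -/
noncomputable def kswap (en : E → Sym2 W) (c : E → Option K) (α β : K) (C : Set W) :
    E → Option K :=
  fun e => if ∃ w ∈ en e, w ∈ C then (c e).map (Equiv.swap α β) else c e

def Closed (en : E → Sym2 W) (c : E → Option K) (α β : K) (C : Set W) : Prop :=
  ∀ e, (c e = some α ∨ c e = some β) → ∀ w ∈ en e, ∀ w' ∈ en e, w ∈ C → w' ∈ C

lemma kswap_in {en : E → Sym2 W} {c : E → Option K} {α β : K} {C : Set W} {e : E} {w : W}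
    (hw : w ∈ en e) (hC : w ∈ C) : kswap en c α β C e = (c e).map (Equiv.swap α β) := by
  unfold kswap; rw [if_pos ⟨w, hw, hC⟩]

lemma kswap_out {en : E → Sym2 W} {c : E → Option K} {α β : K} {C : Set W}
    (hcl : Closed en c α β C) {e : E} {w : W}
    (hw : w ∈ en e) (hC : w ∉ C) : kswap en c α β C e = c e := by
  unfold kswap
  split_ifs with h
  · obtain ⟨w', hw', hC'⟩ := h
    rcases hce : c e with _ | a
    · rfl
    · have h1 : a ≠ α := by
        rintro rfl; exact hC (hcl e (Or.inl hce) w' hw' w hw hC')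
      have h2 : a ≠ β := by
        rintro rfl; exact hC (hcl e (Or.inr hce) w' hw' w hw hC')
      simp [Equiv.swap_apply_of_ne_of_ne h1 h2]
  · rfl

lemma map_swap_eq {α β a : K} {o : Option K} :
    o.map (Equiv.swap α β) = some a ↔ o = some (Equiv.swap α β a) := by
  cases o with
  | none => simp
  | some b => simp [Equiv.swap_apply_eq_iff]

lemma good_kswap {en : E → Sym2 W} {c : E → Option K} (h : Good en c) {α β : K} {C : Set W}
    (hcl : Closed en c α β C) : Good en (kswap en c α β C) := by
  have hp : Prp en (kswap en c α β C) := by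
    intro g g' w hg hg' hne b hb hb'
    by_cases hC : w ∈ C
    · rw [kswap_in hg hC, map_swap_eq] at hb
      rw [kswap_in hg' hC, map_swap_eq] at hb'
      exact h.1 g g' w hg hg' hne _ hb hb'
    · rw [kswap_out hcl hg hC] at hb
      rw [kswap_out hcl hg' hC] at hb'
      exact h.1 g g' w hg hg' hne _ hb hb'
  have hu : unc (kswap en c α β C) = unc c := by
    unfold unc
    congr 1
    ext e
    rw [mem_filter, mem_filter]
    unfold kswap
    split_ifs <;> simp
  exact ⟨hp, fun c' hc' => by rw [hu]; exact h.2 c' hc'⟩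

lemma ms_kswap_in {en : E → Sym2 W} {c : E → Option K} {α β : K} {C : Set W} {w : W}
    (hC : w ∈ C) {a : K} (h : Ms en c w a) : Ms en (kswap en c α β C) w (Equiv.swap α β a) := by
  intro e he
  rw [kswap_in he hC, Ne, map_swap_eq]
  simpa using h e he

lemma ms_kswap_out {en : E → Sym2 W} {c : E → Option K} {α β : K} {C : Set W}
    (hcl : Closed en c α β C) {w : W}
    (hC : w ∉ C) {a : K} (h : Ms en c w a) : Ms en (kswap en c α β C) w a := by
  intro e he
  rw [kswap_out hcl he hC]
  exact h e he

lemma rtg_mono {A : Type} {r p : A → A → Prop} {a b : A} (h : ∀ x z, r x z → p x z)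
    (hr : Relation.ReflTransGen r a b) : Relation.ReflTransGen p a b := by
  induction hr with
  | refl => exact .refl
  | tail _ hs ih => exact ih.tail (h _ _ hs)

lemma exists_nodup_chain {A : Type} {r : A → A → Prop} {a b : A}
    (h : Relation.ReflTransGen r a b) :
    ∃ l : List A, (a :: l).Nodup ∧ (a :: l).IsChain r ∧ (a :: l).getLast (by simp) = b := by
  induction h using Relation.ReflTransGen.head_induction_on with
  | refl => exact ⟨[], by simp⟩
  | @head a' c' hab _ ih =>
    obtain ⟨l, h1, h2, h3⟩ := ih
    by_cases hm : a' ∈ c' :: l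
    · obtain ⟨s, t, hst⟩ := List.append_of_mem hm
      refine ⟨t, ?_, ?_, ?_⟩
      · rw [hst] at h1; exact (List.nodup_append.1 h1).2.1
      · rw [hst] at h2; exact h2.right_of_append
      · rw [← h3]; simp [hst]
    · refine ⟨c' :: l, List.nodup_cons.2 ⟨hm, h1⟩, List.isChain_cons_cons.2 ⟨hab, h2⟩, ?_⟩
      simpa using h3

/-- fan step -/
def R (en : E → Sym2 W) (v : W) (y : E → W) (c : E → Option K) (e f : E) : Prop :=
  v ∈ en f ∧ ∃ a, c f = some a ∧ Ms en c (y e) a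

lemma fan_chain {en : E → Sym2 W} {v : W} {y : E → W}
    (hy : ∀ e, v ∈ en e → en e = s(v, y e)) (α : K) (l : List E) :
    ∀ (c : E → Option K) (e0 : E), Good en c → c e0 = none → v ∈ en e0 →
    (e0 :: l).Nodup → (e0 :: l).IsChain (R en v y c) → Ms en c v α →
    Ms en c (y ((e0 :: l).getLast (by simp))) α → False := by
  induction l with
  | nil =>
    intro c e0 hg h0 hv _ _ h1 h2
    exact good_free hg h0 (hy e0 hv) α h1 (by simpa using h2)
  | cons e1 l ih =>
    intro c e0 hg h0 hv hnd hch h1 h2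
    rw [List.isChain_cons_cons] at hch
    obtain ⟨⟨hv1, a, ha, hma⟩, hch⟩ := hch
    have hne : α ≠ a := by
      rintro rfl
      exact h1 e1 hv1 ha
    have h01 : e0 ≠ e1 := by rintro rfl; simp [h0] at ha
    have key : ∀ w b, b ≠ a → Ms en c w b → Ms en (shift c e0 e1) w b := by
      intro w b hb hm g hg
      unfold shift
      split_ifs with h3 h4
      · simp
      · rw [ha]; simpa using Ne.symm hb
      · exact hm g hg
    refine ih (shift c e0 e1) e1 (good_shift hg h0 (hy e0 hv) a ha hv1 hma) (by simp [shift]) hv1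
      hnd.of_cons ?_ (key _ _ hne h1) (key _ _ hne (by simpa using h2))
    -- the chain
    have hnd1 : e1 ∉ l ∧ l.Nodup := by simpa using hnd.of_cons
    have hnd0 : e0 ∉ l := by
      intro h; exact (List.nodup_cons.1 hnd).1 (List.mem_cons_of_mem _ h)
    have : ∀ g f, f ∈ l → R en v y c g f → R en v y (shift c e0 e1) g f := by
      rintro g f hf ⟨hvf, b, hb, hm⟩
      have hf1 : f ≠ e1 := by rintro rfl; exact hnd1.1 hf
      have hf0 : f ≠ e0 := by rintro rfl; exact hnd0 hf
      refine ⟨hvf, b, by simp [shift, hf1, hf0, hb], key _ _ ?_ hm⟩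
      rintro rfl
      exact hg.1 f e1 v hvf hv1 hf1 _ hb ha
    have gen : ∀ (l' : List E) (g : E), (∀ f ∈ l', f ∈ l) → (g :: l').IsChain (R en v y c) →
        (g :: l').IsChain (R en v y (shift c e0 e1)) := by
      intro l'
      induction l' with
      | nil => intro g _ _; simp
      | cons f l' ih' =>
        intro g hs hc
        rw [List.isChain_cons_cons] at hc ⊢
        exact ⟨this _ _ (hs f (by simp)) hc.1, ih' f (fun x hx => hs x (by simp [hx])) hc.2⟩
    exact gen l e1 (fun _ h => h) hch

lemma fan_free {en : E → Sym2 W} {v : W} {y : E → W}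
    (hy : ∀ e, v ∈ en e → en e = s(v, y e)) {c : E → Option K} {e0 e : E} (hg : Good en c)
    (h0 : c e0 = none) (hv : v ∈ en e0) (hr : Relation.ReflTransGen (R en v y c) e0 e) (α : K)
    (h1 : Ms en c v α) (h2 : Ms en c (y e) α) : False := by
  obtain ⟨l, hl1, hl2, hl3⟩ := exists_nodup_chain hr
  exact fan_chain hy α l c e0 hg h0 hv hl1 hl2 h1 (by rw [hl3]; exact h2)

lemma fan_kempe {en : E → Sym2 W} {v : W} {y : E → W}
    (hy : ∀ e, v ∈ en e → en e = s(v, y e)) {c : E → Option K} {e0 e : E} (hg : Good en c)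
    (h0 : c e0 = none) (hv : v ∈ en e0) {α β : K} {C : Set W} (hcl : Closed en c α β C)
    (hvC : v ∉ C)
    (hr : Relation.ReflTransGen (fun e f => R en v y c e f ∧ (c f = some β → y e ∉ C)) e0 e)
    (h1 : Ms en c v α) (h2 : Ms en c (y e) β) (heC : y e ∈ C) : False := by
  refine fan_free hy (good_kswap hg hcl) (e0 := e0) (e := e)
    (by rw [kswap_out hcl hv hvC]; exact h0) hv ?_ α
    (ms_kswap_out hcl hvC h1) (by simpa using ms_kswap_in (α := α) (β := β) heC h2)
  refine rtg_mono ?_ hr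
  rintro g f ⟨⟨hvf, b, hb, hm⟩, hC⟩
  refine ⟨hvf, b, by rw [kswap_out hcl hvf hvC]; exact hb, ?_⟩
  by_cases hgC : y g ∈ C
  · have hbα : b ≠ α := by rintro rfl; exact h1 f hvf hb
    have hbβ : b ≠ β := by rintro rfl; exact hC hb hgC
    have := ms_kswap_in (α := α) (β := β) hgC hm
    rwa [Equiv.swap_apply_of_ne_of_ne hbα hbβ] at this
  · exact ms_kswap_out hcl hgC hm

lemma reach_restrict {A : Type} {r : A → A → Prop} {P : A → Prop} {Q : A → A → Prop} {a b : A}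
    (hPQ : ∀ x z, r x z → ¬ Q x z → P x)
    (h : Relation.ReflTransGen r a b) (hb : P b) :
    ∃ b', P b' ∧ Relation.ReflTransGen (fun x z => r x z ∧ Q x z) a b' := by
  have : Relation.ReflTransGen (fun x z => r x z ∧ Q x z) a b ∨
      ∃ b', P b' ∧ Relation.ReflTransGen (fun x z => r x z ∧ Q x z) a b' := by
    clear hb
    induction h with
    | refl => exact Or.inl .refl
    | tail _ hs ih =>
      rename_i x z _
      rcases ih with ih | ih
      · by_cases hq : Q x z
        · exact Or.inl (ih.tail ⟨hs, hq⟩)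
        · exact Or.inr ⟨x, hPQ x z hs hq, ih⟩
      · exact Or.inr ih
  rcases this with h | h
  · exact ⟨b, hb, h⟩
  · exact h

end VZ

namespace VZ
open Classical Finset

variable {E W K : Type} [Fintype E] [Fintype W] [Fintype K]

lemma three_ends (H : SimpleGraph W) (h2 : ∀ w, H.degree w ≤ 2) {v a b : W} (hva : v ≠ a)
    (hvb : v ≠ b) (hab : a ≠ b) (hv : H.degree v ≤ 1) (ha : H.degree a ≤ 1)
    (hb : H.degree b ≤ 1) (ra : H.Reachable v a) (rb : H.Reachable v b) : False := by
  set C := H.connectedComponentMk v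
  have hc : C.toSimpleGraph.Connected := C.connected_toSimpleGraph
  have h1 := hc.card_vert_le_card_edgeSet_add_one
  rw [Nat.card_eq_fintype_card, Nat.card_eq_fintype_card, ← SimpleGraph.edgeFinset_card] at h1
  have h3 := C.toSimpleGraph.sum_degrees_eq_twice_card_edges
  have hdeg : ∀ x : C, C.toSimpleGraph.degree x ≤ H.degree x.1 := by
    intro x
    rw [← SimpleGraph.card_neighborFinset_eq_degree, ← SimpleGraph.card_neighborFinset_eq_degree]
    apply Finset.card_le_card_of_injOn (fun z => z.1)
    · intro z hz
      rw [mem_coe, SimpleGraph.mem_neighborFinset] at hz ⊢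
      exact hz
    · intro z _ z' _ h
      exact Subtype.ext h
  let v' : C := ⟨v, rfl⟩
  let a' : C := ⟨a, SimpleGraph.ConnectedComponent.sound ra.symm⟩
  let b' : C := ⟨b, SimpleGraph.ConnectedComponent.sound rb.symm⟩
  have hcard : ({v', a', b'} : Finset C).card = 3 := by
    rw [Finset.card_eq_three]
    exact ⟨v', a', b', fun h => hva (congrArg Subtype.val h),
      fun h => hvb (congrArg Subtype.val h), fun h => hab (congrArg Subtype.val h), rfl⟩
  have hle : ∀ x : C, C.toSimpleGraph.degree x + (if x ∈ ({v', a', b'} : Finset C) then 1 else 0)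
      ≤ 2 := by
    intro x
    split_ifs with hx
    · simp only [mem_insert, mem_singleton] at hx
      have := hdeg x
      rcases hx with rfl | rfl | rfl
      · have : H.degree v'.1 ≤ 1 := hv
        omega
      · have : H.degree a'.1 ≤ 1 := ha
        omega
      · have : H.degree b'.1 ≤ 1 := hb
        omega
    · exact (hdeg x).trans (h2 _)
  have h4 := Finset.sum_le_sum (fun x (_ : x ∈ (univ : Finset C)) => hle x)
  rw [Finset.sum_add_distrib, h3, Finset.sum_ite_mem, Finset.univ_inter] at h4
  simp only [sum_const, hcard, card_univ, smul_eq_mul, mul_one] at h4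
  omega

/-- Kempe graph -/
def HK (en : E → Sym2 W) (c : E → Option K) (α β : K) : SimpleGraph W where
  Adj w w' := w ≠ w' ∧ ∃ e, en e = s(w, w') ∧ (c e = some α ∨ c e = some β)
  symm := ⟨by
    rintro w w' ⟨h, e, h1, h2⟩
    exact ⟨h.symm, e, by rw [h1, Sym2.eq_swap], h2⟩⟩
  loopless := ⟨fun w h => h.1 rfl⟩

lemma HK_deg {en : E → Sym2 W} {c : E → Option K} (hp : Prp en c) (α β : K) (w : W)
    (t : Finset K) (ht : ∀ e, w ∈ en e → (c e = some α ∨ c e = some β) → ∃ a ∈ t, c e = some a) :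
    (HK en c α β).degree w ≤ t.card := by
  rw [← SimpleGraph.card_neighborFinset_eq_degree]
  apply Finset.card_le_card_of_forall_subsingleton
    (fun w' a => ∃ e, en e = s(w, w') ∧ c e = some a)
  · intro w' hw'
    rw [SimpleGraph.mem_neighborFinset] at hw'
    obtain ⟨_, e, h1, h2⟩ := hw'
    obtain ⟨a, ha, h⟩ := ht e (by simp [h1]) h2
    exact ⟨a, ha, e, h1, h⟩
  · rintro a _ w1 ⟨_, e1, h1, h1'⟩ w2 ⟨_, e2, h2, h2'⟩
    have : e1 = e2 := by
      by_contra hne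
      exact hp e1 e2 w (by simp [h1]) (by simp [h2]) hne a h1' h2'
    subst this
    rw [h1] at h2
    exact Sym2.congr_right.1 h2

lemma closed_comp (en : E → Sym2 W) (c : E → Option K) (α β : K)
    (x : W) : Closed en c α β {w | (HK en c α β).Reachable x w} := by
  intro e he w hw w' hw' hx
  by_cases hww : w = w'
  · rwa [← hww]
  · refine SimpleGraph.Reachable.trans hx (SimpleGraph.Adj.reachable ⟨hww, e, ?_, he⟩)
    exact (Sym2.mem_and_mem_iff hww).1 ⟨hw, hw'⟩

lemma fan_disj {en : E → Sym2 W} (hnd : ∀ e, ¬ (en e).IsDiag) {v : W} {y : E → W}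
    (hy : ∀ e, v ∈ en e → en e = s(v, y e)) {c : E → Option K} {e0 e f : E} (hg : Good en c)
    (h0 : c e0 = none) (hv : v ∈ en e0) (he : Relation.ReflTransGen (R en v y c) e0 e)
    (hf : Relation.ReflTransGen (R en v y c) e0 f) {α β : K} (hα : Ms en c v α)
    (heβ : Ms en c (y e) β) (hfβ : Ms en c (y f) β) : y e = y f := by
  by_contra hne
  have hpr : ∀ x z, R en v y c x z → c z = some β → Ms en c (y x) β := by
    rintro x z ⟨_, b, hb, hm⟩ hz
    rw [hb] at hz
    cases hz
    exact hm
  have hvI : ∀ g, Relation.ReflTransGen (R en v y c) e0 g → v ∈ en g := by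
    intro g hg
    rcases Relation.ReflTransGen.cases_tail hg with rfl | ⟨_, _, h⟩
    · exact hv
    · exact h.1
  obtain ⟨ea, hea, ra⟩ := reach_restrict (P := fun x => Ms en c (y x) β)
    (Q := fun x z => c z ≠ some β) (fun x z h1 h2 => hpr x z h1 (by simpa using h2)) he heβ
  have hb : ∃ g, Relation.ReflTransGen (R en v y c) e0 g ∧ Ms en c (y g) β ∧ y g ≠ y ea := by
    by_cases h : y e = y ea
    · exact ⟨f, hf, hfβ, fun h' => hne (h.trans h'.symm)⟩
    · exact ⟨e, he, heβ, h⟩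
  obtain ⟨g, rg, hgβ, hga⟩ := hb
  obtain ⟨eb, ⟨heb, hab⟩, rb⟩ := reach_restrict (P := fun x => Ms en c (y x) β ∧ y x ≠ y ea)
    (Q := fun x z => c z = some β → y x = y ea)
    (fun x z h1 h2 => by
      push Not at h2
      exact ⟨hpr x z h1 h2.1, h2.2⟩) rg ⟨hgβ, hga⟩
  have hny : ∀ g, v ∈ en g → v ≠ y g := by
    intro g hg h
    apply hnd g
    rw [hy g hg, ← h]
    simp
  have hva := hny ea (hvI ea (rtg_mono (fun _ _ h => h.1) ra))
  have hvb := hny eb (hvI eb (rtg_mono (fun _ _ h => h.1) rb))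
  have d2 : ∀ w, (HK en c α β).degree w ≤ 2 := fun w =>
    (HK_deg hg.1 α β w {α, β} (by
      rintro e _ (h | h)
      · exact ⟨α, by simp, h⟩
      · exact ⟨β, by simp, h⟩)).trans Finset.card_le_two
  have dα : ∀ w, Ms en c w α → (HK en c α β).degree w ≤ 1 := fun w hw =>
    (HK_deg hg.1 α β w {β} (by
      rintro e he (h | h)
      · exact absurd h (hw e he)
      · exact ⟨β, by simp, h⟩)).trans (by simp)
  have dβ : ∀ w, Ms en c w β → (HK en c α β).degree w ≤ 1 := fun w hw =>
    (HK_deg hg.1 α β w {α} (by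
      rintro e he (h | h)
      · exact ⟨α, by simp, h⟩
      · exact absurd h (hw e he))).trans (by simp)
  by_cases h1 : (HK en c α β).Reachable (y ea) v
  · by_cases h2 : (HK en c α β).Reachable (y eb) v
    · exact three_ends _ d2 hva hvb hab.symm (dα v hα) (dβ _ hea) (dβ _ heb) h1.symm h2.symm
    · refine fan_kempe hy hg h0 hv (closed_comp en c α β (y eb)) h2 (e := eb) ?_ hα heb
        (SimpleGraph.Reachable.refl _)
      refine rtg_mono ?_ rb
      rintro x z ⟨hr, hq⟩
      refine ⟨hr, fun hz hC => h2 ?_⟩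
      rw [hq hz] at hC
      exact SimpleGraph.Reachable.trans hC h1
  · refine fan_kempe hy hg h0 hv (closed_comp en c α β (y ea)) h1 (e := ea) ?_ hα hea
        (SimpleGraph.Reachable.refl _)
    refine rtg_mono ?_ ra
    rintro x z ⟨hr, hq⟩
    exact ⟨hr, fun hz => absurd hz hq⟩

lemma ms_card {en : E → Sym2 W} (c : E → Option K) (w : W) :
    Fintype.card K ≤ (univ.filter (fun a => Ms en c w a)).card
      + (univ.filter (fun e => w ∈ en e)).card := by
  have h : (univ.filter (fun a => ¬ Ms en c w a)).card ≤ (univ.filter (fun e => w ∈ en e)).card := by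
    apply Finset.card_le_card_of_forall_subsingleton (fun a e => c e = some a)
    · intro a ha
      have ha := (mem_filter.1 ha).2
      unfold Ms at ha
      push Not at ha
      obtain ⟨e, h1, h2⟩ := ha
      exact ⟨e, by simp [h1], h2⟩
    · rintro e _ a ⟨_, ha⟩ b ⟨_, hb⟩
      exact Option.some_injective _ (ha.symm.trans hb)
  have := Finset.card_filter_add_card_filter_not (s := (univ : Finset K)) (fun a => Ms en c w a)
  rw [card_univ] at this
  omega

theorem vizing2 (en : E → Sym2 W) (hnd : ∀ e, ¬ (en e).IsDiag)
    (hdeg : ∀ w, (univ.filter (fun e => w ∈ en e)).card + 2 ≤ Fintype.card K)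
    (hmul : ∀ z, (univ.filter (fun e => en e = z)).card ≤ 2) :
    ∃ c : E → K, ∀ e f w, w ∈ en e → w ∈ en f → e ≠ f → c e ≠ c f := by
  obtain ⟨c, hg⟩ : ∃ c : E → Option K, Good en c := by
    have hne : (univ.filter (fun c : E → Option K => Prp en c)).Nonempty :=
      ⟨fun _ => none, by rw [mem_filter]; simp [Prp]⟩
    obtain ⟨c, h1, h2⟩ := Finset.exists_min_image _ (fun c => unc c) hne
    exact ⟨c, by simpa using h1, fun c' hc' => h2 c' (by simpa using hc')⟩
  by_cases hall : ∀ e, c e ≠ none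
  · have : ∀ e, ∃ a, c e = some a := fun e => Option.ne_none_iff_exists'.1 (hall e)
    choose c' hc' using this
    refine ⟨c', fun e f w h1 h2 hne h => hg.1 e f w h1 h2 hne (c' e) (hc' e) ?_⟩
    rw [h]; exact hc' f
  exfalso
  push Not at hall
  obtain ⟨e0, h0⟩ := hall
  obtain ⟨v, hv⟩ : ∃ v, v ∈ en e0 := ⟨_, Sym2.out_fst_mem _⟩
  have hyex : ∀ e, ∃ y, v ∈ en e → en e = s(v, y) := by
    intro e
    by_cases h : v ∈ en e
    · obtain ⟨y, hy⟩ := h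
      exact ⟨y, fun _ => hy⟩
    · exact ⟨v, fun h' => absurd h' h⟩
  choose y hy using hyex
  obtain ⟨α, hα⟩ : ∃ α, Ms en c v α := by
    have h1 := ms_card (en := en) c v
    have h2 := hdeg v
    have : 0 < (univ.filter (fun a => Ms en c v a)).card := by omega
    obtain ⟨α, h⟩ := Finset.card_pos.1 this
    exact ⟨α, by simpa using h⟩
  set F := univ.filter (fun e => Relation.ReflTransGen (R en v y c) e0 e) with hF
  have hFm : ∀ e, e ∈ F ↔ Relation.ReflTransGen (R en v y c) e0 e := by simp [hF]
  have hvI : ∀ g ∈ F, v ∈ en g := by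
    intro g hg
    rcases Relation.ReflTransGen.cases_tail ((hFm g).1 hg) with rfl | ⟨_, _, h⟩
    · exact hv
    · exact h.1
  set M : W → Finset K := fun w => univ.filter (fun a => Ms en c w a) with hM
  have c1 : F.card = ∑ w ∈ F.image y, (F.filter (fun e => y e = w)).card :=
    Finset.card_eq_sum_card_image y F
  have c2 : ∀ w ∈ F.image y, (F.filter (fun e => y e = w)).card ≤ (M w).card := by
    intro w _
    have h1 : (F.filter (fun e => y e = w)).card ≤ 2 := by
      refine le_trans (Finset.card_le_card ?_) (hmul s(v, w))
      intro e he
      rw [mem_filter] at he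
      simp only [mem_filter, mem_univ, true_and]
      rw [hy e (hvI e he.1), he.2]
    have h2 := ms_card (en := en) c w
    have h3 := hdeg w
    simp only [hM]
    omega
  have c3 : ((F.image y).biUnion M).card = ∑ w ∈ F.image y, (M w).card := by
    apply Finset.card_biUnion
    intro w hw w' hw' hne
    rw [mem_coe, mem_image] at hw hw'
    obtain ⟨e, he, rfl⟩ := hw
    obtain ⟨f, hf, rfl⟩ := hw'
    rw [Function.onFun, Finset.disjoint_left]
    intro β h1 h2
    simp only [hM, mem_filter, mem_univ, true_and] at h1 h2
    exact hne (fan_disj hnd hy hg h0 hv ((hFm e).1 he) ((hFm f).1 hf) hα h1 h2)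
  have c4 : ((F.image y).biUnion M).card ≤ (F.erase e0).card := by
    apply Finset.card_le_card_of_forall_subsingleton (fun a e => c e = some a)
    · intro β hβ
      simp only [mem_biUnion, mem_image, hM, mem_filter, mem_univ, true_and] at hβ
      obtain ⟨_, ⟨e, he, rfl⟩, hβ⟩ := hβ
      have : ¬ Ms en c v β := fun h => fan_free hy hg h0 hv ((hFm e).1 he) β h hβ
      unfold Ms at this
      push Not at this
      obtain ⟨f, hf, hfc⟩ := this
      refine ⟨f, ?_, hfc⟩
      rw [mem_erase]
      refine ⟨by rintro rfl; simp [h0] at hfc, (hFm f).2 (((hFm e).1 he).tail ⟨hf, β, hfc, hβ⟩)⟩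
    · rintro e _ a ⟨_, ha⟩ b ⟨_, hb⟩
      exact Option.some_injective _ (ha.symm.trans hb)
  have he0 : e0 ∈ F := (hFm e0).2 .refl
  have c5 := Finset.card_erase_lt_of_mem he0
  have c6 := Finset.sum_le_sum c2
  omega

end VZ

namespace VZ
open Classical Finset

theorem contract {V : Type} [Fintype V] (G : SimpleGraph V) (Sp : V → V → Prop)
    (hsymm : ∀ u v, Sp u v → Sp v u) (hadj : ∀ u v, Sp u v → G.Adj u v)
    (huniq : ∀ u v w, Sp u v → Sp u w → v = w)
    (hsep : ∀ u v w, Sp u v → G.Adj u w → w ≠ v → ∀ z, ¬ Sp w z) (D : ℕ)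
    (hdeg2 : ∀ u v, Sp u v → G.degree u + G.degree v ≤ D) (hdeg : ∀ u, G.degree u ≤ D) :
    ∃ c : Sym2 V → ℕ, ProperEdgeColoring G c ∧ (∀ e ∈ G.edgeSet, c e < D + 2) ∧
      ∀ u v, Sp u v → colorSet G c u ∩ colorSet G c v = {c s(u, v)} := by
  let π : V → Set V := fun u => {w | w = u ∨ Sp u w}
  have hπ : ∀ a b, π a = π b ↔ a = b ∨ Sp a b := by
    intro a b
    constructor
    · intro h
      have : a ∈ π b := by rw [← h]; exact Or.inl rfl
      exact this.imp id (hsymm _ _)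
    · rintro (rfl | h)
      · rfl
      · ext w
        constructor
        · rintro (rfl | h')
          · exact Or.inr (hsymm _ _ h)
          · exact Or.inl (huniq _ _ _ h' h)
        · rintro (rfl | h')
          · exact Or.inr h
          · exact Or.inl (huniq _ _ _ h' (hsymm _ _ h))
  let E := {e : Sym2 V // e ∈ G.edgeSet ∧ ∀ u v, e = s(u, v) → ¬ Sp u v}
  let en : E → Sym2 (Set V) := fun e => Sym2.map π e.1
  have hdE : ∀ w, (univ.filter (fun e => w ∈ en e)).card ≤ D := by
    intro w
    have main : ∀ u, w = π u → (univ.filter (fun e => w ∈ en e)).card ≤ D := by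
      rintro u rfl
      by_cases hs : ∃ v, Sp u v
      · obtain ⟨v, hv⟩ := hs
        refine le_trans ?_ (hdeg2 u v hv)
        rw [← SimpleGraph.card_incidenceFinset_eq_degree, ← SimpleGraph.card_incidenceFinset_eq_degree]
        refine le_trans ?_ (Finset.card_union_le _ _)
        apply Finset.card_le_card_of_injOn (fun e : E => e.1)
        · intro e he
          have he := (mem_filter.1 he).2
          obtain ⟨a, ha, hau⟩ := Sym2.mem_map.1 he
          rw [mem_coe, mem_union, SimpleGraph.mem_incidenceFinset, SimpleGraph.mem_incidenceFinset]
          rcases (hπ _ _).1 hau with rfl | h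
          · exact Or.inl ⟨e.2.1, ha⟩
          · have := huniq _ _ _ (hsymm _ _ h) hv
            subst this
            exact Or.inr ⟨e.2.1, ha⟩
        · intro e _ f _ h
          exact Subtype.ext h
      · refine le_trans ?_ (hdeg u)
        rw [← SimpleGraph.card_incidenceFinset_eq_degree]
        apply Finset.card_le_card_of_injOn (fun e : E => e.1)
        · intro e he
          have he := (mem_filter.1 he).2
          obtain ⟨a, ha, hau⟩ := Sym2.mem_map.1 he
          rw [mem_coe, SimpleGraph.mem_incidenceFinset]
          rcases (hπ _ _).1 hau with rfl | h
          · exact ⟨e.2.1, ha⟩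
          · exact absurd ⟨a, hsymm _ _ h⟩ hs
        · intro e _ f _ h
          exact Subtype.ext h
    rcases (univ.filter (fun e => w ∈ en e)).eq_empty_or_nonempty with h | ⟨e, he⟩
    · rw [h]; simp
    · obtain ⟨a, _, hau⟩ := Sym2.mem_map.1 (mem_filter.1 he).2
      exact main a hau.symm
  obtain ⟨c, hc⟩ : ∃ c : E → Fin (D + 2), ∀ e f w, w ∈ en e → w ∈ en f → e ≠ f → c e ≠ c f := by
    apply vizing2
    · rintro ⟨e, he⟩
      induction e with
      | h a b =>
        simp only [en, Sym2.map_mk, Sym2.mk_isDiag_iff, hπ]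
        rintro (h | h)
        · exact G.ne_of_adj he.1 h
        · exact he.2 a b rfl h
    · intro w
      rw [Fintype.card_fin]
      have := hdE w
      refine Nat.add_le_add_right ?_ 2
      convert this
    · intro z
      by_cases hz : ∃ e, en e = z
      swap
      · push Not at hz
        refine le_trans (le_of_eq (Finset.card_eq_zero.2 ?_)) (Nat.zero_le 2)
        exact Finset.filter_false_of_mem (fun e _ => hz e)
      · obtain ⟨⟨e, he⟩, rfl⟩ := hz
        induction e with
        | h a b =>
          have hab : G.Adj a b := he.1
          have ht : ∃ t : Sym2 V, ∀ x y, (x = a ∨ Sp x a) → (y = b ∨ Sp y b) →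
              s(x, y) = s(a, b) ∨ s(x, y) = t := by
            by_cases hb : ∃ b2, Sp b b2
            · obtain ⟨b2, hb⟩ := hb
              have hna := hsep b b2 a hb hab.symm (by
                rintro rfl
                exact he.2 a b rfl (hsymm _ _ hb))
              refine ⟨s(a, b2), ?_⟩
              rintro x y (rfl | hx) hy
              · rcases hy with rfl | hy
                · exact Or.inl rfl
                · right; rw [huniq _ _ _ (hsymm _ _ hy) hb]
              · exact absurd (hsymm _ _ hx) (hna x)
            · by_cases ha : ∃ a2, Sp a a2
              · obtain ⟨a2, ha⟩ := ha
                refine ⟨s(a2, b), ?_⟩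
                rintro x y hx (rfl | hy)
                · rcases hx with rfl | hx
                  · exact Or.inl rfl
                  · right; rw [huniq _ _ _ (hsymm _ _ hx) ha]
                · exact absurd ⟨y, hsymm _ _ hy⟩ hb
              · refine ⟨s(a, b), ?_⟩
                rintro x y (rfl | hx) (rfl | hy)
                · exact Or.inl rfl
                · exact absurd ⟨y, hsymm _ _ hy⟩ hb
                · exact absurd ⟨x, hsymm _ _ hx⟩ ha
                · exact absurd ⟨x, hsymm _ _ hx⟩ ha
          obtain ⟨t, ht⟩ := ht
          refine le_trans ?_ (Finset.card_le_two (a := s(a, b)) (b := t))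
          apply Finset.card_le_card_of_injOn (fun e : E => e.1)
          · rintro ⟨f, hf⟩ hf'
            have hf' := (mem_filter.1 hf').2
            simp only [coe_insert, coe_singleton, Set.mem_insert_iff, Set.mem_singleton_iff]
            induction f with
            | h x y =>
              simp only [en, Sym2.map_mk, Sym2.eq_iff, hπ] at hf'
              rcases hf' with ⟨h1, h2⟩ | ⟨h1, h2⟩
              · exact ht x y h1 h2
              · rw [Sym2.eq_swap]
                exact ht y x h2 h1
          · intro e _ f _ h
            exact Subtype.ext h
  have hfree : ∀ w : Set V, ∃ n : Fin (D + 2), ∀ e, w ∈ en e → c e ≠ n := by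
    intro w
    have h1 : ((univ.filter (fun e => w ∈ en e)).image c).card < (univ : Finset (Fin (D + 2))).card := by
      have := hdE w
      have := Finset.card_image_le (s := univ.filter (fun e => w ∈ en e)) (f := c)
      rw [card_univ, Fintype.card_fin]
      omega
    obtain ⟨n, _, hn⟩ := Finset.exists_mem_notMem_of_card_lt_card h1
    refine ⟨n, fun e he h => hn ?_⟩
    rw [mem_image]
    exact ⟨e, mem_filter.2 ⟨mem_univ _, he⟩, h⟩
  choose g hg using hfree
  let c' : Sym2 V → ℕ := fun e =>
    if h : e ∈ G.edgeSet ∧ ∀ u v, e = s(u, v) → ¬ Sp u v then (c ⟨e, h⟩ : ℕ)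
    else (g (π e.out.1) : ℕ)
  have hc1 : ∀ e (h : e ∈ G.edgeSet ∧ ∀ u v, e = s(u, v) → ¬ Sp u v), c' e = c ⟨e, h⟩ := by
    intro e h
    simp only [c', dif_pos h]
  have hc2 : ∀ u v, Sp u v → c' s(u, v) = g (π u) := by
    intro u v h
    have hn : ¬ (s(u, v) ∈ G.edgeSet ∧ ∀ u' v', s(u, v) = s(u', v') → ¬ Sp u' v') :=
      fun h' => h'.2 u v rfl h
    simp only [c', dif_neg hn]
    have hm : s(u, v).out.1 ∈ s(u, v) := Sym2.out_fst_mem _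
    have : π (s(u, v).out.1) = π u := by
      rw [hπ]
      rcases Sym2.mem_iff.1 hm with h1 | h1
      · exact Or.inl h1
      · right; rw [h1]; exact hsymm _ _ h
    rw [this]
  have key : ∀ e ∈ G.edgeSet, ∀ f ∈ G.edgeSet, e ≠ f → ∀ x y, x ∈ e → y ∈ f → π x = π y →
      c' e ≠ c' f := by
    have aux : ∀ u v, Sp u v → ∀ f (h : f ∈ G.edgeSet ∧ ∀ u v, f = s(u, v) → ¬ Sp u v),
        ∀ x y, x ∈ s(u, v) → y ∈ f → π x = π y → c' s(u, v) ≠ c' f := by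
      intro u v huv f h x y hx hy hxy heq
      rw [hc1 f h, hc2 u v huv] at heq
      refine hg (π u) ⟨f, h⟩ (Sym2.mem_map.2 ⟨y, hy, ?_⟩) (Fin.ext heq.symm)
      rw [← hxy, hπ]
      rcases Sym2.mem_iff.1 hx with rfl | rfl
      · exact Or.inl rfl
      · exact Or.inr (hsymm _ _ huv)
    intro e he f hf hne x y hx hy hxy
    by_cases h1 : ∀ u v, e = s(u, v) → ¬ Sp u v
    · by_cases h2 : ∀ u v, f = s(u, v) → ¬ Sp u v
      · rw [hc1 e ⟨he, h1⟩, hc1 f ⟨hf, h2⟩]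
        intro h
        refine hc ⟨e, he, h1⟩ ⟨f, hf, h2⟩ (π x) (Sym2.mem_map.2 ⟨x, hx, rfl⟩)
          (Sym2.mem_map.2 ⟨y, hy, hxy.symm⟩) (fun h => hne (congrArg Subtype.val h)) (Fin.ext h)
      · push Not at h2
        obtain ⟨u, v, rfl, huv⟩ := h2
        exact (aux u v huv e ⟨he, h1⟩ y x hy hx hxy.symm).symm
    · push Not at h1
      obtain ⟨u, v, rfl, huv⟩ := h1
      by_cases h2 : ∀ u v, f = s(u, v) → ¬ Sp u v
      · exact aux u v huv f ⟨hf, h2⟩ x y hx hy hxy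
      · exfalso
        push Not at h2
        obtain ⟨u', v', rfl, huv'⟩ := h2
        apply hne
        have hp : ∀ a b z, Sp a b → z ∈ s(a, b) → ∃ z', Sp z z' ∧ s(a, b) = s(z, z') := by
          intro a b z hab hz
          rcases Sym2.mem_iff.1 hz with rfl | rfl
          · exact ⟨b, hab, rfl⟩
          · exact ⟨a, hsymm _ _ hab, Sym2.eq_swap⟩
        obtain ⟨x', hx', ex⟩ := hp u v x huv hx
        obtain ⟨y', hy', ey⟩ := hp u' v' y huv' hy
        rw [ex, ey]
        rcases (hπ _ _).1 hxy with rfl | h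
        · rw [huniq _ _ _ hx' hy']
        · rw [huniq _ _ _ hx' h, huniq _ _ _ hy' (hsymm _ _ h), Sym2.eq_swap]
  refine ⟨c', ?_, ?_, ?_⟩
  · rintro e he f hf hne ⟨v, hve, hvf⟩
    exact key e he f hf hne v v hve hvf rfl
  · intro e _
    simp only [c']
    split_ifs
    · exact Fin.is_lt _
    · exact Fin.is_lt _
  · intro u v huv
    ext n
    simp only [Set.mem_inter_iff, Set.mem_singleton_iff, colorSet, Set.mem_ofPred_eq]
    constructor
    · rintro ⟨⟨x, hx, hxn⟩, ⟨y, hy, hyn⟩⟩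
      by_cases hxv : x = v
      · rw [← hxn, hxv]
      · exfalso
        refine key s(u, x) hx s(v, y) hy ?_ u v (by simp) (by simp) ((hπ _ _).2 (Or.inr huv))
          (hxn.trans hyn.symm)
        intro h
        rcases Sym2.eq_iff.1 h with ⟨h1, _⟩ | ⟨_, h1⟩
        · exact G.ne_of_adj (hadj _ _ huv) h1
        · exact hxv h1
    · rintro rfl
      exact ⟨⟨v, hadj _ _ huv, rfl⟩, ⟨u, (hadj _ _ huv).symm, by rw [Sym2.eq_swap]⟩⟩

end VZ

/-- Every finite simple graph `G` with maximum degree `Δ`, no isolated edge, and a positive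
integer `d` with `2(d-1) < Δ`, has a proper edge colouring with at most `Δ + 2` colours such
that for every edge `uv` for which the set of vertices `w ∈ N(u) ∪ N(v)` of degree `< d` is
exactly `{u, v}`, the colour sets of `u` and `v` intersect exactly in the colour of `uv`. -/
theorem initial_colouring (V : Type) [Fintype V] [DecidableEq V]
    (G : SimpleGraph V) [DecidableRel G.Adj]
    (hiso : ∀ u v : V, G.Adj u v → ¬(G.degree u = 1 ∧ G.degree v = 1))
    (d : ℕ) (hd : 0 < d) (hdΔ : 2 * (d - 1) < G.maxDegree) :
    ∃ c : Sym2 V → ℕ,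
      ProperEdgeColoring G c ∧
      (∀ e ∈ G.edgeSet, c e < G.maxDegree + 2) ∧
      (∀ u v : V, G.Adj u v →
        {w : V | (G.Adj u w ∨ G.Adj v w) ∧ G.degree w < d} = {u, v} →
        colorSet G c u ∩ colorSet G c v = {c s(u, v)}) := by
  let Sp : V → V → Prop := fun u v =>
    G.Adj u v ∧ {w : V | (G.Adj u w ∨ G.Adj v w) ∧ G.degree w < d} = {u, v}
  have hsymm : ∀ u v, Sp u v → Sp v u := by
    rintro u v ⟨h1, h2⟩
    refine ⟨h1.symm, ?_⟩
    rw [Set.pair_comm, ← h2]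
    ext w
    simp only [Set.mem_ofPred_eq, or_comm]
  have hlow : ∀ u v, Sp u v → G.degree u < d := by
    rintro u v ⟨h1, h2⟩
    have : u ∈ {w : V | (G.Adj u w ∨ G.Adj v w) ∧ G.degree w < d} := by rw [h2]; simp
    exact this.2
  have hnb : ∀ u v w, Sp u v → G.Adj u w → G.degree w < d → w = v := by
    rintro u v w ⟨h1, h2⟩ hw hwd
    have : w ∈ ({u, v} : Set V) := by rw [← h2]; exact ⟨Or.inl hw, hwd⟩
    rcases this with rfl | h
    · exact absurd hw (G.loopless.irrefl _)
    · exact h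
  obtain ⟨c, h1, h2, h3⟩ := VZ.contract G Sp hsymm (fun u v h => h.1)
    (fun u v w h h' => (hnb u v w h h'.1 (hlow w u (hsymm _ _ h'))).symm)
    (fun u v w h hw hne z hz => hne (hnb u v w h hw (hlow w z hz))) G.maxDegree
    (fun u v h => by
      have a1 := hlow u v h
      have a2 := hlow v u (hsymm _ _ h)
      have : G.degree u + G.degree v ≤ G.maxDegree := by omega
      convert this)
    (fun u => by
      have := G.degree_le_maxDegree u
      convert this)
  exact ⟨c, h1, h2, fun u v h h' => h3 u v ⟨h, h'⟩⟩
end
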